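/- arXiv:2605.30479 — 9 statements merged into one kernel-verified Lean document; each statement's English description precedes it below -/
import Mathlib

section
/- Let 𝒳 be a set, 𝒴 a countable set, and ℋ ⊆ 𝒴^𝒳 a concept class. If ℋ has an infinite indifferent LCL-Littlestone (LCLL) tree, then for every transductive online learning algorithm 𝒜 (deterministic or randomized, with mistakes counted in expectation over its internal randomness) there exists a sequence (𝕏,𝕐) realizable by ℋ such that limsup_{T→∞} M(𝒜,(𝕏,𝕐),T)/T ≥ 1/4; in particular, no learner can guarantee a sublinear number of mistakes. -/
/-!
The instance sequence is fixed once and for all, and the labels are then chosen greedily against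
the learner.

Block `n` of the instance sequence occupies the rounds `2 ^ n - 1 ≤ t < 2 ^ (n + 1) - 1` and lists
the `2 ^ n` instances of a node of depth `2 ^ n - 1`, whose path is the finite bit pattern `pat n`;
in the enumeration `pat` every finite pattern appears infinitely often. Each block is thus longer
than everything that precedes it.

When the branch being built passes through the node of block `n`, indifference forces the labels
of all earlier blocks, on or off the branch, to be the same for every concept chosen below that
node (`hC_eq`). Within the block the next bit of the branch selects one of two different labels
without affecting the earlier ones, and any prediction misses one of two different labels with
probability at least `1/2`. Choosing the bits one at a time in this way forces `2 ^ n / 2` expected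
mistakes during the block (`exists_greedy`), that is at least a quarter of the first
`2 ^ (n + 1) - 1` rounds. The resulting finite pattern equals `pat n'` for some later `n'`, so the
branch passes through the node of block `n'` too, and the construction repeats forever. The
labels produced at successive stages extend one another, and this gives the realizable sequence.
-/


open Filter MeasureTheory
open scoped ENNReal

attribute [local instance] Classical.propDecidable

noncomputable section


/-- `(xs, ys)` is realizable by `H`: every finite prefix is consistent with some concept. -/
def Realizable {X Y : Type*} (H : Set (X → Y)) (xs : ℕ → X) (ys : ℕ → Y) : Prop :=
  ∀ n : ℕ, ∃ h ∈ H, ∀ i < n, h (xs i) = ys i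

/-- A randomized transductive online learning algorithm: at each round it outputs a
probability distribution over labels from which the prediction is sampled. -/
abbrev RandPred (X Y : Type*) := (ℕ → X) → List Y → PMF Y

/-- Probability that a label sampled from `p` differs from the true label `y0`. -/
def mistakeProb {Y : Type*} (p : PMF Y) (y0 : Y) : ℝ≥0∞ :=
  ∑' y, if y = y0 then 0 else p y

/-- Expected number of mistakes of the randomized algorithm `A` on `(xs, ys)` during the
first `T` rounds. -/
def expMistakes {X Y : Type*} (A : RandPred X Y) (xs : ℕ → X) (ys : ℕ → Y) (T : ℕ) : ℝ≥0∞ :=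
  ∑ t ∈ Finset.range T, mistakeProb (A xs ((List.range t).map ys)) (ys t)

/-- An infinite LCL-Littlestone (LCLL) tree for `H`.
`x k u i` is the `i`-th instance (`i ≤ k`) of the tuple labeling the depth-`k` node on
the path described by the bits `u m j` (`m < k`, `j ≤ m`); `y k u i` is the label of that
instance along the branch additionally described by the bits `u k j` for `j ≤ i`. -/
def IsLCLLTree {X Y : Type*} (H : Set (X → Y))
    (x : ℕ → (ℕ → ℕ → Bool) → ℕ → X)
    (y : ℕ → (ℕ → ℕ → Bool) → ℕ → Y) : Prop :=
  (∀ k : ℕ, ∀ u u' : ℕ → ℕ → Bool,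
      (∀ m < k, ∀ j ≤ m, u m j = u' m j) → ∀ i ≤ k, x k u i = x k u' i) ∧
  (∀ k i : ℕ, i ≤ k → ∀ u u' : ℕ → ℕ → Bool,
      (∀ m < k, ∀ j ≤ m, u m j = u' m j) → (∀ j ≤ i, u k j = u' k j) →
      y k u i = y k u' i) ∧
  (∀ k i : ℕ, i ≤ k → ∀ u u' : ℕ → ℕ → Bool,
      (∀ m < k, ∀ j ≤ m, u m j = u' m j) → (∀ j < i, u k j = u' k j) →
      u k i ≠ u' k i → y k u i ≠ y k u' i) ∧
  (∀ u : ℕ → ℕ → Bool, ∀ n : ℕ, ∃ h ∈ H, ∀ k ≤ n, ∀ i ≤ k, h (x k u i) = y k u i)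

/-- `H` has an infinite LCLL tree. -/
def HasInfLCLLTree {X Y : Type*} (H : Set (X → Y)) : Prop :=
  ∃ x y, IsLCLLTree H x y

/-- Lexicographic (left-to-right) order between two depth-`k` node paths. -/
def NodePathLt (k : ℕ) (a b : ℕ → ℕ → Bool) : Prop :=
  ∃ m < k, ∃ j ≤ m, a m j = false ∧ b m j = true ∧
    ∀ m' < k, ∀ j' ≤ m', (m' < m ∨ (m' = m ∧ j' < j)) → a m' j' = b m' j'

/-- Breadth-first-search order between nodes of an LCLL tree: smaller depth first, and
lexicographic order within a level. -/
def NodeBFSLt (kv : ℕ) (uv : ℕ → ℕ → Bool) (ku : ℕ) (uu : ℕ → ℕ → Bool) : Prop :=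
  kv < ku ∨ (kv = ku ∧ NodePathLt kv uv uu)

/-- The node `(kw, uw)` is a descendant of the node `(ku, uu)`. -/
def NodeDesc (ku : ℕ) (uu : ℕ → ℕ → Bool) (kw : ℕ) (uw : ℕ → ℕ → Bool) : Prop :=
  ku ≤ kw ∧ ∀ m < ku, ∀ j ≤ m, uu m j = uw m j

/-- An indifferent infinite LCLL tree: there is a choice of consistent concepts
`hC n u ∈ H`, one for each finite branch, such that whenever a node `v` precedes a node
`u` in BFS order and `w` is a descendant of `u`, the concepts chosen for (the branches
ending at) `u` and `w` agree on all the instances labeling the node `v`. -/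
def IsIndiffLCLLTree {X Y : Type*} (H : Set (X → Y))
    (x : ℕ → (ℕ → ℕ → Bool) → ℕ → X)
    (y : ℕ → (ℕ → ℕ → Bool) → ℕ → Y) : Prop :=
  IsLCLLTree H x y ∧
  ∃ hC : ℕ → (ℕ → ℕ → Bool) → X → Y,
    (∀ n u, hC n u ∈ H) ∧
    (∀ n : ℕ, ∀ u u' : ℕ → ℕ → Bool,
        (∀ m ≤ n, ∀ j ≤ m, u m j = u' m j) → hC n u = hC n u') ∧
    (∀ n : ℕ, ∀ u : ℕ → ℕ → Bool, ∀ k ≤ n, ∀ i ≤ k, hC n u (x k u i) = y k u i) ∧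
    (∀ kv ku kw : ℕ, ∀ uv uu uw : ℕ → ℕ → Bool,
        NodeBFSLt kv uv ku uu → NodeDesc ku uu kw uw →
        ∀ i ≤ kv, hC ku uu (x kv uv i) = hC kw uw (x kv uv i))

/-- `H` has an infinite indifferent LCLL tree. -/
def HasInfIndiffLCLLTree {X Y : Type*} (H : Set (X → Y)) : Prop :=
  ∃ x y, IsIndiffLCLLTree H x y

/-- The bit array with value `true` exactly on the finite set `S`. -/
def bits (S : Finset (ℕ × ℕ)) (m j : ℕ) : Bool := decide ((m, j) ∈ S)

/-- An enumeration of the finite bit patterns in which each of them appears infinitely often. -/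
def pat (n : ℕ) : Finset (ℕ × ℕ) :=
  (exists_surjective_nat (Finset (ℕ × ℕ))).choose n.unpair.1

lemma exists_pat (S : Finset (ℕ × ℕ)) (n : ℕ) : ∃ n' > n, pat n' = S := by
  obtain ⟨a, ha⟩ := (exists_surjective_nat (Finset (ℕ × ℕ))).choose_spec S
  refine ⟨Nat.pair a (n + 1), Nat.right_le_pair a (n + 1), ?_⟩
  simp [pat, ha]

/-- The instance sequence made of the blocks `n = 0, 1, …`, where block `n` lists the instances of
the node of depth `2 ^ n - 1` on the path `bits (pat n)`. Round `t` lies in block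
`Nat.log 2 (t + 1)`. -/
def blockSeq {X : Type*} (x : ℕ → (ℕ → ℕ → Bool) → ℕ → X) (t : ℕ) : X :=
  x (2 ^ Nat.log 2 (t + 1) - 1) (bits (pat (Nat.log 2 (t + 1)))) (t + 1 - 2 ^ Nat.log 2 (t + 1))

lemma half_le_mistakeProb {Y : Type*} (p : PMF Y) {a b : Y} (hab : a ≠ b) :
    1 / 2 ≤ mistakeProb p a ∨ 1 / 2 ≤ mistakeProb p b := by
  by_contra! h
  have h1 : 1 ≤ mistakeProb p a + mistakeProb p b := by
    unfold mistakeProb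
    rw [← ENNReal.tsum_add, ← p.tsum_coe]
    refine ENNReal.tsum_le_tsum fun y => ?_
    by_cases hy : y = a
    · have : y ≠ b := fun hb => hab (hy.symm.trans hb)
      simp [this]
    · simp [hy]
  have h2 := ENNReal.add_lt_add h.1 h.2
  rw [ENNReal.add_halves] at h2
  exact absurd h1 (not_le.2 h2)

/-- The clauses of `IsIndiffLCLLTree` that concern the choice `hC` of consistent concepts. -/
structure IndiffChoice {X Y : Type*} (x : ℕ → (ℕ → ℕ → Bool) → ℕ → X)
    (y : ℕ → (ℕ → ℕ → Bool) → ℕ → Y) (hC : ℕ → (ℕ → ℕ → Bool) → X → Y) : Prop where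
  consistent : ∀ n : ℕ, ∀ u : ℕ → ℕ → Bool, ∀ k ≤ n, ∀ i ≤ k, hC n u (x k u i) = y k u i
  indiff : ∀ kv ku kw : ℕ, ∀ uv uu uw : ℕ → ℕ → Bool,
    NodeBFSLt kv uv ku uu → NodeDesc ku uu kw uw →
    ∀ i ≤ kv, hC ku uu (x kv uv i) = hC kw uw (x kv uv i)

section

variable {X Y : Type*} {H : Set (X → Y)} {x : ℕ → (ℕ → ℕ → Bool) → ℕ → X}
  {y : ℕ → (ℕ → ℕ → Bool) → ℕ → Y} {hC : ℕ → (ℕ → ℕ → Bool) → X → Y}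

/-- On a branch through the node of block `n`, the label of the `i`-th instance of block `n` is
the one prescribed by the tree. -/
lemma hC_block (hT : IsLCLLTree H x y) (hI : IndiffChoice x y hC) {n kw i : ℕ}
    {w : ℕ → ℕ → Bool} (hk : 2 ^ n - 1 ≤ kw)
    (hw : ∀ m < 2 ^ n - 1, ∀ j ≤ m, bits (pat n) m j = w m j) (hi : i ≤ 2 ^ n - 1) :
    hC kw w (blockSeq x (2 ^ n - 1 + i)) = y (2 ^ n - 1) w i := by
  have h2 : 0 < 2 ^ n := by positivity
  have hlog : Nat.log 2 (2 ^ n - 1 + i + 1) = n := by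
    apply Nat.log_eq_of_pow_le_of_lt_pow
    · omega
    · rw [pow_succ]; omega
  unfold blockSeq
  rw [hlog, show 2 ^ n - 1 + i + 1 - 2 ^ n = i by omega, hT.1 _ _ _ hw i hi]
  exact hI.consistent _ _ _ hk _ hi

/-- Every concept chosen below the node of block `n` assigns the same labels to all blocks before
block `n`, and its labels on the first `i` instances of block `n` depend only on the first `i`
bits chosen at that node. -/
lemma hC_eq (hT : IsLCLLTree H x y) (hI : IndiffChoice x y hC) {n kw i t : ℕ}
    {u w : ℕ → ℕ → Bool} (hk : 2 ^ n - 1 ≤ kw)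
    (hu : ∀ m < 2 ^ n - 1, ∀ j ≤ m, bits (pat n) m j = u m j)
    (hw : ∀ m < 2 ^ n - 1, ∀ j ≤ m, u m j = w m j)
    (hi : i ≤ 2 ^ n) (hb : ∀ j < i, u (2 ^ n - 1) j = w (2 ^ n - 1) j)
    (ht : t < 2 ^ n - 1 + i) :
    hC (2 ^ n - 1) u (blockSeq x t) = hC kw w (blockSeq x t) := by
  have h2 : 0 < 2 ^ n := by positivity
  rcases lt_or_ge t (2 ^ n - 1) with h | h
  · have hle : 2 ^ Nat.log 2 (t + 1) ≤ t + 1 := Nat.pow_log_le_self 2 (by omega)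
    have hlt : t + 1 < 2 ^ (Nat.log 2 (t + 1) + 1) := Nat.lt_pow_succ_log_self (by norm_num) _
    rw [pow_succ] at hlt
    exact hI.indiff _ _ _ _ _ _ (Or.inl (by omega)) ⟨hk, hw⟩ _ (by omega)
  · obtain ⟨j, rfl⟩ := Nat.exists_eq_add_of_le h
    have hj : j ≤ 2 ^ n - 1 := by omega
    rw [hC_block hT hI le_rfl hu hj,
      hC_block hT hI hk (fun m hm l hl => (hu m hm l hl).trans (hw m hm l hl)) hj]
    exact hT.2.1 _ _ hj _ _ hw fun l hl => hb l (by omega)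

/-- Bits at the node of block `n` can be chosen so that the learner errs with probability at least
`1/2` on each of the first `i` instances of the block. -/
lemma exists_greedy_aux (hT : IsLCLLTree H x y) (hI : IndiffChoice x y hC) (A : RandPred X Y)
    (n i : ℕ) (hi : i ≤ 2 ^ n) :
    ∃ S : Finset (ℕ × ℕ), (∀ m < 2 ^ n - 1, ∀ j ≤ m, bits (pat n) m j = bits S m j) ∧
      ∀ j < i, 1 / 2 ≤ mistakeProb
        (A (blockSeq x) ((List.range (2 ^ n - 1 + j)).map
          fun t => hC (2 ^ n - 1) (bits S) (blockSeq x t)))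
        (hC (2 ^ n - 1) (bits S) (blockSeq x (2 ^ n - 1 + j))) := by
  induction i with
  | zero => exact ⟨pat n, fun _ _ _ _ => rfl, fun j hj => absurd hj (Nat.not_lt_zero j)⟩
  | succ i ih =>
    obtain ⟨S, hS, hm⟩ := ih (by omega)
    -- Rewriting bit `i` of the node keeps all labels before instance `i` of the block.
    have key : ∀ S' : Finset (ℕ × ℕ), (∀ q, q ≠ (2 ^ n - 1, i) → (q ∈ S ↔ q ∈ S')) →
        (∀ m < 2 ^ n - 1, ∀ j ≤ m, bits S m j = bits S' m j) ∧
        (∀ j < i, bits S (2 ^ n - 1) j = bits S' (2 ^ n - 1) j) ∧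
        ∀ t < 2 ^ n - 1 + i, hC (2 ^ n - 1) (bits S) (blockSeq x t) =
          hC (2 ^ n - 1) (bits S') (blockSeq x t) := by
      intro S' h
      have h1 : ∀ m < 2 ^ n - 1, ∀ j ≤ m, bits S m j = bits S' m j := fun m hm j _ => by
        simp only [bits]
        rw [decide_eq_decide]
        exact h _ (by simp; omega)
      have h2 : ∀ j < i, bits S (2 ^ n - 1) j = bits S' (2 ^ n - 1) j := fun j hj => by
        simp only [bits]
        rw [decide_eq_decide]
        exact h _ (by simp; omega)
      exact ⟨h1, h2, fun t ht => hC_eq hT hI le_rfl hS h1 (by omega) h2 ht⟩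
    have fin : ∀ S' : Finset (ℕ × ℕ), (∀ q, q ≠ (2 ^ n - 1, i) → (q ∈ S ↔ q ∈ S')) →
        1 / 2 ≤ mistakeProb
          (A (blockSeq x) ((List.range (2 ^ n - 1 + i)).map
            fun t => hC (2 ^ n - 1) (bits S) (blockSeq x t)))
          (hC (2 ^ n - 1) (bits S') (blockSeq x (2 ^ n - 1 + i))) →
        ∃ S : Finset (ℕ × ℕ), (∀ m < 2 ^ n - 1, ∀ j ≤ m, bits (pat n) m j = bits S m j) ∧
          ∀ j < i + 1, 1 / 2 ≤ mistakeProb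
            (A (blockSeq x) ((List.range (2 ^ n - 1 + j)).map
              fun t => hC (2 ^ n - 1) (bits S) (blockSeq x t)))
            (hC (2 ^ n - 1) (bits S) (blockSeq x (2 ^ n - 1 + j))) := by
      intro S' h hp
      obtain ⟨h1, h2, h3⟩ := key S' h
      have hmap : ∀ j ≤ i, ((List.range (2 ^ n - 1 + j)).map
            fun t => hC (2 ^ n - 1) (bits S') (blockSeq x t)) =
          (List.range (2 ^ n - 1 + j)).map
            fun t => hC (2 ^ n - 1) (bits S) (blockSeq x t) := fun j hj => by
        refine List.map_congr_left fun t ht => (h3 t ?_).symm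
        rw [List.mem_range] at ht
        omega
      refine ⟨S', fun m hm j hj => (hS m hm j hj).trans (h1 m hm j hj), fun j hj => ?_⟩
      rw [hmap j (by omega)]
      rcases Nat.lt_succ_iff_lt_or_eq.1 hj with hj | rfl
      · rw [← h3 _ (by omega)]
        exact hm j hj
      · exact hp
    have e0 : ∀ q, q ≠ (2 ^ n - 1, i) → (q ∈ S ↔ q ∈ S.erase (2 ^ n - 1, i)) := fun q hq => by
      simp [hq]
    have e1 : ∀ q, q ≠ (2 ^ n - 1, i) → (q ∈ S ↔ q ∈ insert (2 ^ n - 1, i) S) := fun q hq => by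
      simp [hq]
    have hne : hC (2 ^ n - 1) (bits (S.erase (2 ^ n - 1, i))) (blockSeq x (2 ^ n - 1 + i)) ≠
        hC (2 ^ n - 1) (bits (insert (2 ^ n - 1, i) S)) (blockSeq x (2 ^ n - 1 + i)) := by
      obtain ⟨a1, a2, -⟩ := key _ e0
      obtain ⟨b1, b2, -⟩ := key _ e1
      rw [hC_block hT hI le_rfl (fun m hm j hj => (hS m hm j hj).trans (a1 m hm j hj)) (by omega),
        hC_block hT hI le_rfl (fun m hm j hj => (hS m hm j hj).trans (b1 m hm j hj)) (by omega)]
      refine hT.2.2.1 _ _ (by omega) _ _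
        (fun m hm j hj => (a1 m hm j hj).symm.trans (b1 m hm j hj))
        (fun j hj => (a2 j hj).symm.trans (b2 j hj)) ?_
      simp [bits]
    rcases half_le_mistakeProb (A (blockSeq x) ((List.range (2 ^ n - 1 + i)).map
        fun t => hC (2 ^ n - 1) (bits S) (blockSeq x t))) hne with h | h
    · exact fin _ e0 h
    · exact fin _ e1 h

/-- `exists_greedy_aux` for the whole block, with the chosen pattern located later in the
enumeration `pat`. -/
lemma exists_greedy (hT : IsLCLLTree H x y) (hI : IndiffChoice x y hC) (A : RandPred X Y)
    (n : ℕ) :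
    ∃ n' > n, (∀ m < 2 ^ n - 1, ∀ j ≤ m, bits (pat n) m j = bits (pat n') m j) ∧
      ∀ j < 2 ^ n, 1 / 2 ≤ mistakeProb
        (A (blockSeq x) ((List.range (2 ^ n - 1 + j)).map
          fun t => hC (2 ^ n - 1) (bits (pat n')) (blockSeq x t)))
        (hC (2 ^ n - 1) (bits (pat n')) (blockSeq x (2 ^ n - 1 + j))) := by
  obtain ⟨S, hS, hm⟩ := exists_greedy_aux hT hI A n (2 ^ n) le_rfl
  obtain ⟨n', hn, rfl⟩ := exists_pat S n
  exact ⟨n', hn, hS, hm⟩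

end

/-- An error probability of at least `1/2` throughout block `n` gives an expected mistake rate of
at least `1/4` at the end of the block. -/
lemma quarter_le_rate {X Y : Type*} (A : RandPred X Y) (xs : ℕ → X) (ys : ℕ → Y) (n : ℕ)
    (h : ∀ j < 2 ^ n, 1 / 2 ≤
      mistakeProb (A xs ((List.range (2 ^ n - 1 + j)).map ys)) (ys (2 ^ n - 1 + j))) :
    (1 / 4 : ℝ≥0∞) ≤
      expMistakes A xs ys (2 ^ n - 1 + 2 ^ n) / ((2 ^ n - 1 + 2 ^ n : ℕ) : ℝ≥0∞) := by
  have h2 : 0 < 2 ^ n := by positivity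
  rw [ENNReal.le_div_iff_mul_le (Or.inl (by norm_cast; omega)) (Or.inl (ENNReal.natCast_ne_top _))]
  have h1 : (2 ^ n : ℕ) * (1 / 2 : ℝ≥0∞) ≤ expMistakes A xs ys (2 ^ n - 1 + 2 ^ n) := by
    unfold expMistakes
    rw [Finset.sum_range_add]
    refine le_trans ?_ le_add_self
    calc ((2 ^ n : ℕ) : ℝ≥0∞) * (1 / 2) = ∑ _j ∈ Finset.range (2 ^ n), (1 / 2 : ℝ≥0∞) := by simp
      _ ≤ _ := Finset.sum_le_sum fun j hj => h j (Finset.mem_range.1 hj)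
  refine le_trans ?_ h1
  calc (1 / 4 : ℝ≥0∞) * ((2 ^ n - 1 + 2 ^ n : ℕ) : ℝ≥0∞)
      ≤ 1 / 4 * ((2 * 2 ^ n : ℕ) : ℝ≥0∞) := by gcongr; omega
    _ = (2 ^ n : ℕ) * (1 / 4 * 2) := by rw [Nat.cast_mul, Nat.cast_two]; ring
    _ = (2 ^ n : ℕ) * (1 / 2) := by
      congr 1
      rw [← ENNReal.toReal_eq_toReal_iff' (by simp [ENNReal.mul_eq_top]) (by simp)]
      simp
      norm_num

/-- If `H` has an infinite indifferent LCLL tree, then for every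
(randomized, hence in particular deterministic) transductive online learning algorithm
there is a realizable sequence on which the expected fraction of mistakes has
`limsup ≥ 1/4`; in particular no learner guarantees sublinearly many mistakes. -/
theorem statement0 {X Y : Type*} [Countable Y] (H : Set (X → Y))
    (hH : HasInfIndiffLCLLTree H) (A : RandPred X Y) :
    ∃ (xs : ℕ → X) (ys : ℕ → Y), Realizable H xs ys ∧
      (1 / 4 : ℝ≥0∞) ≤
        Filter.limsup (fun T : ℕ => expMistakes A xs ys T / (T : ℝ≥0∞)) Filter.atTop := by
  obtain ⟨x, y, hT, hC, hmem, -, hcons, hind⟩ := hH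
  have hI : IndiffChoice x y hC := ⟨hcons, hind⟩
  choose next hnext hagree hmist using exists_greedy hT hI A
  -- `N s` is the index of the `s`-th block on the greedy branch.
  let N : ℕ → ℕ := fun s => next^[s] 0
  have hN : ∀ s, N (s + 1) = next (N s) := fun s => Function.iterate_succ_apply' _ _ _
  have hmono : StrictMono N := strictMono_nat_of_lt_succ fun s => by
    rw [hN]; exact hnext _
  -- `G s` is the concept selected at stage `s`; it settles the labels up to the end of block `N s`.
  let G : ℕ → X → Y := fun s => hC (2 ^ N s - 1) (bits (pat (N (s + 1))))
  have hstep : ∀ s t, t < 2 ^ N s - 1 + 2 ^ N s →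
      G s (blockSeq x t) = G (s + 1) (blockSeq x t) := by
    intro s t ht
    have hlt : 2 ^ N s < 2 ^ N (s + 1) := Nat.pow_lt_pow_right (by norm_num) (hmono s.lt_succ_self)
    have hpos : 0 < 2 ^ N s := by positivity
    have h1 := hagree (N s)
    have h2 := hagree (N (s + 1))
    rw [← hN] at h1 h2
    exact hC_eq hT hI (by omega) h1 (fun m hm j hj => h2 m (by omega) j hj) le_rfl
      (fun j hj => h2 _ (by omega) j (by omega)) ht
  have hstable : ∀ s s', s ≤ s' → ∀ t, t < 2 ^ N s - 1 + 2 ^ N s →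
      G s (blockSeq x t) = G s' (blockSeq x t) := by
    intro s s' hs t ht
    induction s', hs using Nat.le_induction with
    | base => rfl
    | succ s' hs ih =>
      have : 2 ^ N s ≤ 2 ^ N s' := Nat.pow_le_pow_right (by norm_num) (hmono.monotone hs)
      exact ih.trans (hstep s' t (by omega))
  have hself : ∀ t, t < 2 ^ N t - 1 + 2 ^ N t := fun t => by
    have h1 : t ≤ N t := hmono.le_apply
    have h2 : N t < 2 ^ N t := Nat.lt_two_pow_self
    omega
  have hys : ∀ s t, t < 2 ^ N s - 1 + 2 ^ N s → G t (blockSeq x t) = G s (blockSeq x t) :=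
    fun s t ht => (hstable t _ (le_max_left t s) t (hself t)).trans
      (hstable s _ (le_max_right t s) t ht).symm
  refine ⟨blockSeq x, fun t => G t (blockSeq x t), fun n => ⟨G n, hmem _ _, fun i hi => ?_⟩, ?_⟩
  · exact (hstable i n hi.le i (hself i)).symm
  · refine le_limsup_of_frequently_le (frequently_atTop.2 fun a => ?_) (by isBoundedDefault)
    refine ⟨2 ^ N a - 1 + 2 ^ N a, (hself a).le, quarter_le_rate A _ _ _ fun j hj => ?_⟩
    have h := hmist (N a) j hj
    rw [← hN] at h
    have hmap : ((List.range (2 ^ N a - 1 + j)).map fun t => G t (blockSeq x t)) =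
        (List.range (2 ^ N a - 1 + j)).map fun t => G a (blockSeq x t) := by
      refine List.map_congr_left fun t ht => hys a t ?_
      rw [List.mem_range] at ht
      omega
    rw [hmap]
    rw [hys a _ (by omega)]
    exact h
end
end

section
/- Let 𝒳 be a set, 𝒴 a countable set, and ℋ ⊆ 𝒴^𝒳 a concept class. If ℋ has an infinite indifferent Littlestone tree, then for every transductive online learning algorithm 𝒜 (deterministic or randomized, with mistakes counted in expectation over its internal randomness) there exists a sequence (𝕏,𝕐) realizable by ℋ such that limsup_{T→∞} M(𝒜,(𝕏,𝕐),T)/log₂ T ≥ 1/2; in particular, the adversary may force any learning algorithm to make Ω(log T) mistakes. -/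
/-!
The adversary presents the nodes of the tree in breadth-first order and commits to an infinite
branch `P 0, P 1, …`, where `P (n + 1)` is a child of `P n`; the true label of a node `v` at depth
`ℓ` is the value of the concept `hC (P (ℓ + 1))` at `x v`.

Indifference has two consequences.  The concept `hC (P m)` agrees with these labels on all nodes
of depth below `m`, so the sequence is realizable.  The labels of the nodes presented before `P n`
are the values of `hC (P n)`, so they depend on `P n` alone and not on the rest of the branch.
Hence the prediction distribution at the round of `P n` is known before the next bit is chosen, and
one of the two distinct labels available there is missed with probability at least `1/2`
(`half_le_mistakeProb_or`); the branch continues along such a label.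

The first `2 ^ n - 1` rounds exhaust the levels below `n` and contain `P 0, …, P (n - 1)`, hence
carry at least `n / 2` expected mistakes, while `log₂ (2 ^ n - 1) ≤ n`.
-/

open Filter MeasureTheory
open scoped ENNReal

attribute [local instance] Classical.propDecidable

noncomputable section


/-- An infinite Littlestone tree for `H`: `x u` is the instance at the node indexed by
the finite binary string `u`, and `lab u b` is the label of the edge from that node to
its `b`-child. -/
def IsLitTree {X Y : Type*} (H : Set (X → Y))
    (x : List Bool → X) (lab : List Bool → Bool → Y) : Prop :=
  (∀ u : List Bool, lab u false ≠ lab u true) ∧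
  (∀ u : List Bool, ∃ h ∈ H, ∀ i < u.length,
      h (x (u.take i)) = lab (u.take i) (u.getD i false))

/-- `H` has an infinite Littlestone tree. -/
def HasInfLitTree {X Y : Type*} (H : Set (X → Y)) : Prop :=
  ∃ x lab, IsLitTree H x lab

/-- Numeric value of a binary string (most significant bit first). -/
def bitVal (l : List Bool) : ℕ := l.foldl (fun n b => 2 * n + cond b 1 0) 0

/-- Breadth-first-search order on nodes of the infinite binary tree. -/
def ListBFSLt (v u : List Bool) : Prop :=
  v.length < u.length ∨ (v.length = u.length ∧ bitVal v < bitVal u)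

/-- An indifferent infinite Littlestone tree: there is a choice of consistent concepts
`hC u ∈ H`, one per finite branch, such that if `v` precedes `u` in BFS order and `w` is
a descendant of `u`, then the concepts chosen for `u` and `w` agree on `x v`. -/
def IsIndiffLitTree {X Y : Type*} (H : Set (X → Y))
    (x : List Bool → X) (lab : List Bool → Bool → Y) : Prop :=
  IsLitTree H x lab ∧
  ∃ hC : List Bool → X → Y,
    (∀ u, hC u ∈ H) ∧
    (∀ u : List Bool, ∀ i < u.length,
        hC u (x (u.take i)) = lab (u.take i) (u.getD i false)) ∧
    (∀ v u w : List Bool, ListBFSLt v u → u <+: w → hC u (x v) = hC w (x v))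

/-- `H` has an infinite indifferent Littlestone tree. -/
def HasInfIndiffLitTree {X Y : Type*} (H : Set (X → Y)) : Prop :=
  ∃ x lab, IsIndiffLitTree H x lab

/-- One plus the position (counted from `0`) of a node in breadth-first order: the number whose
binary expansion is a leading `1` followed by the string. -/
def bfsCode (u : List Bool) : ℕ := 2 ^ u.length + bitVal u

lemma bfsCode_append (u : List Bool) (b : Bool) :
    bfsCode (u ++ [b]) = 2 * bfsCode u + cond b 1 0 := by
  simp only [bfsCode, bitVal, List.length_append, List.foldl_append, List.foldl_cons,
    List.foldl_nil, List.length_singleton, pow_succ]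
  ring

lemma bfsCode_lt (u : List Bool) : bfsCode u < 2 ^ (u.length + 1) := by
  induction u using List.reverseRecOn with
  | nil => simp [bfsCode, bitVal]
  | append_singleton u b ih =>
    rw [bfsCode_append, List.length_append, List.length_singleton, pow_succ]
    cases b <;> simp only [cond_true, cond_false] <;> omega

lemma two_pow_le_bfsCode (u : List Bool) : 2 ^ u.length ≤ bfsCode u := Nat.le_add_right _ _

lemma bfsCode_pos (u : List Bool) : 0 < bfsCode u :=
  lt_of_lt_of_le (by positivity) (two_pow_le_bfsCode u)

lemma bfsCode_injective : Function.Injective bfsCode := by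
  intro u
  induction u using List.reverseRecOn with
  | nil =>
    intro v h
    induction v using List.reverseRecOn with
    | nil => rfl
    | append_singleton v c _ =>
      have := bfsCode_pos v
      rw [bfsCode_append] at h
      rw [show bfsCode [] = 1 by simp [bfsCode, bitVal]] at h
      cases c <;> simp only [cond_true, cond_false] at h <;> omega
  | append_singleton u b ih =>
    intro v h
    induction v using List.reverseRecOn with
    | nil =>
      have := bfsCode_pos u
      rw [bfsCode_append] at h
      rw [show bfsCode [] = 1 by simp [bfsCode, bitVal]] at h
      cases b <;> simp only [cond_true, cond_false] at h <;> omega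
    | append_singleton v c _ =>
      rw [bfsCode_append, bfsCode_append] at h
      cases b <;> cases c <;> simp only [cond_true, cond_false] at h
      · rw [ih (show bfsCode u = bfsCode v by omega)]
      · omega
      · omega
      · rw [ih (show bfsCode u = bfsCode v by omega)]

lemma exists_bfsCode_eq (n : ℕ) (hn : 0 < n) : ∃ u, bfsCode u = n := by
  induction n using Nat.strong_induction_on with
  | _ n ih =>
    by_cases h1 : n = 1
    · exact ⟨[], by simp [bfsCode, bitVal, h1]⟩
    · obtain ⟨u, hu⟩ := ih (n / 2) (by omega) (by omega)
      rcases Nat.mod_two_eq_zero_or_one n with h | h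
      · exact ⟨u ++ [false], by rw [bfsCode_append, hu]; simp only [cond_false]; omega⟩
      · exact ⟨u ++ [true], by rw [bfsCode_append, hu]; simp only [cond_true]; omega⟩

lemma listBFSLt_of_bfsCode_lt {v u : List Bool} (h : bfsCode v < bfsCode u) :
    ListBFSLt v u := by
  rcases lt_trichotomy v.length u.length with hl | hl | hl
  · exact Or.inl hl
  · refine Or.inr ⟨hl, ?_⟩
    simpa [bfsCode, hl] using h
  · have h1 := bfsCode_lt u
    have h2 := two_pow_le_bfsCode v
    have h3 : 2 ^ (u.length + 1) ≤ 2 ^ v.length := Nat.pow_le_pow_right (by norm_num) hl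
    omega

/-- Of two distinct labels, at least one is missed with probability at least `1/2`. -/
lemma half_le_mistakeProb_or {Y : Type*} (p : PMF Y) {y₀ y₁ : Y} (h : y₀ ≠ y₁) :
    (1 / 2 : ℝ≥0∞) ≤ mistakeProb p y₀ ∨ (1 / 2 : ℝ≥0∞) ≤ mistakeProb p y₁ := by
  by_contra! hlt
  have hsum : p y₀ + mistakeProb p y₀ = 1 := by
    rw [← p.tsum_coe, ENNReal.tsum_eq_add_tsum_ite y₀, mistakeProb]
  have hle : p y₀ ≤ mistakeProb p y₁ := by
    have := ENNReal.le_tsum (f := fun y => if y = y₁ then 0 else p y) y₀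
    simpa [h, mistakeProb] using this
  have hlt1 : p y₀ + mistakeProb p y₀ < 1 / 2 + 1 / 2 :=
    ENNReal.add_lt_add (hle.trans_lt hlt.2) hlt.1
  rw [hsum, ENNReal.add_halves] at hlt1
  exact lt_irrefl _ hlt1

/-- The branch obtained by always moving to the child selected by `bit`. -/
def branch (bit : List Bool → Bool) : ℕ → List Bool
  | 0 => []
  | n + 1 => branch bit n ++ [bit (branch bit n)]

lemma length_branch (bit : List Bool → Bool) (n : ℕ) : (branch bit n).length = n := by
  induction n with
  | zero => rfl
  | succ n ih => simp [branch, ih]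

lemma branch_isPrefix_of_le (bit : List Bool → Bool) {m n : ℕ} (h : m ≤ n) :
    branch bit m <+: branch bit n := by
  induction n, h using Nat.le_induction with
  | base => exact List.prefix_rfl
  | succ n _ ih => exact ih.trans (List.prefix_append _ _)

/-- If `H` has an infinite indifferent Littlestone tree, then every
(randomized, hence in particular deterministic) transductive online learning algorithm
can be forced, on some realizable sequence, to make at least `(1/2) · log₂ T` expected
mistakes infinitely often; in particular the adversary forces `Ω(log T)` mistakes. -/
theorem statement2 {X Y : Type*} [Countable Y] (H : Set (X → Y))
    (hH : HasInfIndiffLitTree H) (A : RandPred X Y) :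
    ∃ (xs : ℕ → X) (ys : ℕ → Y), Realizable H xs ys ∧
      (1 / 2 : ℝ≥0∞) ≤
        Filter.limsup
          (fun T : ℕ => expMistakes A xs ys T / ENNReal.ofReal (Real.logb 2 T))
          Filter.atTop := by
  obtain ⟨x, lab, ⟨hne, -⟩, hC, hCH, hlab, hind⟩ := hH
  choose node hnode using fun t : ℕ => exists_bfsCode_eq (t + 1) t.succ_pos
  have hnode' : ∀ u, node (bfsCode u - 1) = u := fun u =>
    bfsCode_injective (by rw [hnode]; have := bfsCode_pos u; omega)
  set xs : ℕ → X := fun t => x (node t) with hxs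
  -- `hC u` supplies the labels revealed before node `u`, so the next bit is a function of `u`.
  have hbit : ∀ u : List Bool, ∃ b : Bool, (1 / 2 : ℝ≥0∞) ≤
      mistakeProb (A xs ((List.range (bfsCode u - 1)).map fun t => hC u (xs t))) (lab u b) := by
    intro u
    rcases half_le_mistakeProb_or
      (A xs ((List.range (bfsCode u - 1)).map fun t => hC u (xs t))) (hne u) with h | h
    · exact ⟨false, h⟩
    · exact ⟨true, h⟩
  choose bit hbit using hbit
  set P := branch bit with hP
  have hlen : ∀ n, (P n).length = n := length_branch bit
  set ys : ℕ → Y := fun t => hC (P ((node t).length + 1)) (xs t) with hys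
  have hdepth : ∀ t m, (node t).length < m → ys t = hC (P m) (xs t) := fun t m h =>
    hind _ _ _ (Or.inl (by rw [hlen]; exact Nat.lt_succ_self _)) (branch_isPrefix_of_le bit h)
  -- At depth equal to that of `P n`, the nodes preceding `P n` already obey `hC (P n)`.
  have hpast : ∀ n t, t < bfsCode (P n) - 1 → ys t = hC (P n) (xs t) := by
    intro n t ht
    have hlt : ListBFSLt (node t) (P n) :=
      listBFSLt_of_bfsCode_lt (by rw [hnode]; omega)
    have hle : (node t).length ≤ n := by
      rcases hlt with h | h <;> rw [hlen] at h <;> omega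
    rw [hdepth t (n + 1) (by omega)]
    exact (hind _ _ _ hlt (branch_isPrefix_of_le bit n.le_succ)).symm
  have hcur : ∀ n, ys (bfsCode (P n) - 1) = lab (P n) (bit (P n)) := by
    intro n
    have h := hlab (P (n + 1)) n (by rw [hlen]; omega)
    have hs : P (n + 1) = P n ++ [bit (P n)] := rfl
    have htake : (P (n + 1)).take n = P n := by
      rw [hs, List.take_append_of_le_length (hlen n).ge, List.take_of_length_le (hlen n).le]
    have hget : (P (n + 1)).getD n false = bit (P n) := by
      rw [hs, List.getD_append_right _ _ _ _ (hlen n).le, hlen]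
      simp
    rw [htake, hget] at h
    simp only [hys, hxs, hnode', hlen]
    exact h
  have hmist : ∀ n, (1 / 2 : ℝ≥0∞) ≤ mistakeProb
      (A xs ((List.range (bfsCode (P n) - 1)).map ys)) (ys (bfsCode (P n) - 1)) := by
    intro n
    rw [hcur, List.map_congr_left (fun t ht => hpast n t (List.mem_range.1 ht))]
    exact hbit (P n)
  have hexp : ∀ n : ℕ, (1 / 2 : ℝ≥0∞) * n ≤ expMistakes A xs ys (2 ^ n - 1) := by
    intro n
    have hinj : Set.InjOn (fun i => bfsCode (P i) - 1) (Finset.range n : Set ℕ) := by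
      intro i _ j _ hij
      have hi := bfsCode_pos (P i)
      have hj := bfsCode_pos (P j)
      have hij' : P i = P j := bfsCode_injective (by simp only at hij; omega)
      rw [← hlen i, hij', hlen]
    calc (1 / 2 : ℝ≥0∞) * n = ∑ _i ∈ Finset.range n, (1 / 2 : ℝ≥0∞) := by
          rw [Finset.sum_const, Finset.card_range, nsmul_eq_mul, mul_comm]
      _ ≤ ∑ i ∈ Finset.range n, mistakeProb
            (A xs ((List.range (bfsCode (P i) - 1)).map ys)) (ys (bfsCode (P i) - 1)) :=
          Finset.sum_le_sum fun i _ => hmist i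
      _ = ∑ t ∈ (Finset.range n).image (fun i => bfsCode (P i) - 1),
            mistakeProb (A xs ((List.range t).map ys)) (ys t) :=
          (Finset.sum_image (f := fun t => mistakeProb (A xs ((List.range t).map ys)) (ys t))
            hinj).symm
      _ ≤ expMistakes A xs ys (2 ^ n - 1) := by
          refine Finset.sum_le_sum_of_subset fun t ht => ?_
          obtain ⟨i, hi, rfl⟩ := Finset.mem_image.1 ht
          have h1 := bfsCode_lt (P i)
          rw [hlen] at h1
          have h2 : 2 ^ (i + 1) ≤ 2 ^ n :=
            Nat.pow_le_pow_right (by norm_num) (Finset.mem_range.1 hi)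
          have h3 := bfsCode_pos (P i)
          exact Finset.mem_range.2 (by omega)
  refine ⟨xs, ys, fun n => ⟨hC (P (n + 1)), hCH _, fun t ht => ?_⟩, ?_⟩
  · refine (hdepth t (n + 1) ?_).symm
    have h1 := two_pow_le_bfsCode (node t)
    rw [hnode] at h1
    have h2 : (node t).length < 2 ^ (node t).length := Nat.lt_two_pow_self
    omega
  · refine le_limsup_of_frequently_le (frequently_atTop.2 fun N => ?_)
    have hN : N + 1 < 2 ^ (N + 1) := Nat.lt_two_pow_self
    refine ⟨2 ^ (N + 1) - 1, by omega, ?_⟩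
    have hpos : expMistakes A xs ys (2 ^ (N + 1) - 1) ≠ 0 := by
      refine (lt_of_lt_of_le ?_ (hexp (N + 1))).ne'
      exact ENNReal.mul_pos (by simp) (by simp)
    rw [ENNReal.le_div_iff_mul_le (Or.inr hpos) (Or.inl ENNReal.ofReal_ne_top)]
    refine le_trans (mul_le_mul_right ?_ _) (hexp (N + 1))
    refine ENNReal.ofReal_le_of_le_toReal ?_
    rw [ENNReal.toReal_natCast, Real.logb_le_iff_le_rpow (by norm_num)
      (by exact_mod_cast (by omega : 0 < 2 ^ (N + 1) - 1)), Real.rpow_natCast]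
    exact_mod_cast Nat.sub_le (2 ^ (N + 1)) 1
end
end

section
/- Let 𝒳 be a set, 𝒴 a countable set, and ℋ ⊆ 𝒴^𝒳 a concept class. If ℋ has no infinite indifferent LCL-Littlestone (LCLL) tree, then for every instance sequence 𝕏 = (X_t)_{t≥1} in 𝒳, player P_B has a winning strategy in the LCLL game on ℋ and 𝕏. -/
/-!
The LCLL game is open for `P_B`, so it is determined: if `P_B` has no winning strategy then `P_A`
has a strategy `(AT, AL)` that keeps the labels realizable by `H` forever
(`exists_forcing_strategy`). The proof is the Gale–Stewart argument, carried out on positions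
`(T, L, U)` before round `r`, of which only the part below `r` matters (`WinsFrom`).

Such a strategy yields an infinite indifferent LCLL tree. Enumerate the nodes of the tree
in BFS order by an injective, strictly increasing index `nodeIdx`, and let the node of index `n` be
played at round `ρ n` of the game, with `P_B` choosing the all-`false` branch in the other rounds.
At round `r` the player `P_B` has only finitely many relevant histories, so the positions used
by `P_A` at round `r` are bounded by some `G r`; take `ρ (n + 1) > G (ρ n)`. Since round `r` starts
at a position `≥ r`, a node `u` is then played strictly later than every instance of the
nodes preceding it in BFS order. The concepts attached to `u` and to its descendants follow
plays with the same labels before round `ρ (nodeIdx u)`, hence agree on all those instances.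
-/

open Filter MeasureTheory
open scoped ENNReal

attribute [local instance] Classical.propDecidable

noncomputable section


/-- Start position of round `r` of the game (positions are 0-indexed). -/
def gStart (T : ℕ → ℕ → ℕ) (r : ℕ) : ℕ := if r = 0 then 0 else T (r - 1) (r - 1) + 1

/-- Legality of `P_A`'s move at round `r` of the LCLL game: branch points
`gStart T r ≤ T r 0 < ⋯ < T r r`, together with a level-constrained family
`u ↦ L r u` of candidate label sequences for the positions `p` with
`gStart T r ≤ p ≤ T r r`: the label at `p` depends only on the bits `u j` with
`T r j ≤ p`, and flipping the bit `u i` changes the label at the branch point `T r i`. -/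
def LCLLLegal {Y : Type*} (T : ℕ → ℕ → ℕ) (L : ℕ → (ℕ → Bool) → ℕ → Y) (r : ℕ) : Prop :=
  gStart T r ≤ T r 0 ∧ (∀ i < r, T r i < T r (i + 1)) ∧
  (∀ p : ℕ, gStart T r ≤ p → p ≤ T r r → ∀ u u' : ℕ → Bool,
      (∀ j ≤ r, T r j ≤ p → u j = u' j) → L r u p = L r u' p) ∧
  (∀ i ≤ r, ∀ u u' : ℕ → Bool,
      (∀ j ≤ r, T r j < T r i → u j = u' j) → u i ≠ u' i →
      L r u (T r i) ≠ L r u' (T r i))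

/-- `P_B` (whose choices are `U`) has won by round `r`: no concept in `H` is consistent
with all the labels fixed so far. -/
def LCLLWinAt {X Y : Type*} (H : Set (X → Y)) (xs : ℕ → X) (T : ℕ → ℕ → ℕ)
    (L : ℕ → (ℕ → Bool) → ℕ → Y) (U : ℕ → ℕ → Bool) (r : ℕ) : Prop :=
  ¬ ∃ h ∈ H, ∀ r' ≤ r, ∀ p : ℕ, gStart T r' ≤ p → p ≤ T r' r' → h (xs p) = L r' (U r') p

/-- A strategy for `P_B` in the LCLL game: given the round and all moves of `P_A`,
choose a branch (i.e. an element of the offered family). -/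
abbrev LCLLStrategy (Y : Type*) :=
  ℕ → (ℕ → ℕ → ℕ) → (ℕ → (ℕ → Bool) → ℕ → Y) → (ℕ → Bool)

/-- The strategy only looks at the moves made up to the current round. -/
def LCLLCausal {Y : Type*} (σ : LCLLStrategy Y) : Prop :=
  ∀ r : ℕ, ∀ T T' : ℕ → ℕ → ℕ, ∀ L L' : ℕ → (ℕ → Bool) → ℕ → Y,
    (∀ r' ≤ r, T r' = T' r' ∧ L r' = L' r') → σ r T L = σ r T' L'

/-- `σ` is a winning strategy for `P_B`: along every infinite legal play in which `P_B`
follows `σ`, `P_B` wins at some finite round. -/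
def LCLLWinning {X Y : Type*} (H : Set (X → Y)) (xs : ℕ → X) (σ : LCLLStrategy Y) : Prop :=
  ∀ T : ℕ → ℕ → ℕ, ∀ L : ℕ → (ℕ → Bool) → ℕ → Y,
    (∀ r, LCLLLegal T L r) → ∃ r, LCLLWinAt H xs T L (fun r' => σ r' T L) r

/-! ### Determinacy of the game -/

section Determinacy

variable {X Y : Type*}

lemma gStart_congr {T T' : ℕ → ℕ → ℕ} {r : ℕ} (h : ∀ r' < r, T r' = T' r') :
    gStart T r = gStart T' r := by
  unfold gStart
  split_ifs with h0
  · rfl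
  · rw [h (r - 1) (by omega)]

lemma legal_congr {T T' : ℕ → ℕ → ℕ} {L L' : ℕ → (ℕ → Bool) → ℕ → Y} {r : ℕ}
    (hT : ∀ r' ≤ r, T r' = T' r') (hL : L r = L' r) (h : LCLLLegal T L r) :
    LCLLLegal T' L' r := by
  unfold LCLLLegal at h ⊢
  rw [← gStart_congr (fun r' hr' => hT r' hr'.le), ← hT r le_rfl, ← hL]
  exact h

lemma winAt_congr {H : Set (X → Y)} {xs : ℕ → X} {T T' : ℕ → ℕ → ℕ}
    {L L' : ℕ → (ℕ → Bool) → ℕ → Y} {U U' : ℕ → ℕ → Bool} {r : ℕ}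
    (hT : ∀ r' ≤ r, T r' = T' r') (hL : ∀ r' ≤ r, L r' = L' r')
    (hU : ∀ r' ≤ r, U r' = U' r') (h : LCLLWinAt H xs T L U r) :
    LCLLWinAt H xs T' L' U' r := by
  rintro ⟨c, hc, hcons⟩
  refine h ⟨c, hc, fun r' hr' p h1 h2 => ?_⟩
  rw [gStart_congr (fun s hs => hT s (hs.le.trans hr'))] at h1
  rw [hT r' hr'] at h2
  rw [hL r' hr', hU r' hr']
  exact hcons r' hr' p h1 h2

/-- `P_B` can force a win from the position given by the moves `T`, `L`, `U` of the rounds before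
`r`; the values of `T`, `L`, `U` from `r` on are irrelevant. -/
def WinsFrom (H : Set (X → Y)) (xs : ℕ → X) (r : ℕ) (T : ℕ → ℕ → ℕ)
    (L : ℕ → (ℕ → Bool) → ℕ → Y) (U : ℕ → ℕ → Bool) : Prop :=
  ∃ σ : LCLLStrategy Y, LCLLCausal σ ∧
    ∀ T' : ℕ → ℕ → ℕ, ∀ L' : ℕ → (ℕ → Bool) → ℕ → Y,
      (∀ r' < r, T' r' = T r') → (∀ r' < r, L' r' = L r') → (∀ r', LCLLLegal T' L' r') →
      ∃ n, LCLLWinAt H xs T' L' (fun r' => if r' < r then U r' else σ r' T' L') n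

lemma causal_const : LCLLCausal (fun _ _ _ _ => false : LCLLStrategy Y) :=
  fun _ _ _ _ _ _ => rfl

/-- From a position that `P_B` cannot win, `P_A` has a legal move after which `P_B` still cannot
win, whatever the answer. -/
lemma exists_safe_move {H : Set (X → Y)} {xs : ℕ → X} {r : ℕ} {T : ℕ → ℕ → ℕ}
    {L : ℕ → (ℕ → Bool) → ℕ → Y} {U : ℕ → ℕ → Bool} (h : ¬ WinsFrom H xs r T L U) :
    ∃ t : ℕ → ℕ, ∃ l : (ℕ → Bool) → ℕ → Y,
      LCLLLegal (Function.update T r t) (Function.update L r l) r ∧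
      ∀ u : ℕ → Bool, ¬ WinsFrom H xs (r + 1) (Function.update T r t) (Function.update L r l)
        (Function.update U r u) := by
  by_contra hcon
  push Not at hcon
  -- a winning answer and continuation for each move, arbitrary when the move is illegal
  have key : ∀ (t : ℕ → ℕ) (l : (ℕ → Bool) → ℕ → Y), ∃ u : ℕ → Bool, ∃ σ : LCLLStrategy Y,
      LCLLCausal σ ∧ (LCLLLegal (Function.update T r t) (Function.update L r l) r →
      ∀ T' : ℕ → ℕ → ℕ, ∀ L' : ℕ → (ℕ → Bool) → ℕ → Y,
      (∀ r' < r + 1, T' r' = Function.update T r t r') →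
      (∀ r' < r + 1, L' r' = Function.update L r l r') → (∀ r', LCLLLegal T' L' r') →
      ∃ n, LCLLWinAt H xs T' L'
        (fun r' => if r' < r + 1 then Function.update U r u r' else σ r' T' L') n) := by
    intro t l
    by_cases hl : LCLLLegal (Function.update T r t) (Function.update L r l) r
    · obtain ⟨u, σ, hσ, hw⟩ := hcon t l hl
      exact ⟨u, σ, hσ, fun _ => hw⟩
    · exact ⟨fun _ => false, _, causal_const, fun h => absurd h hl⟩
  choose u σ hσ hw using key
  refine h ⟨fun r' T' L' => if r' < r then fun _ => false else if r' = r then u (T' r) (L' r)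
    else σ (T' r) (L' r) r' T' L', ?_, ?_⟩
  · intro r' T' T'' L' L'' hh
    rcases lt_trichotomy r' r with h1 | h1 | h1
    · simp [h1]
    · subst h1
      simp [(hh r' le_rfl).1, (hh r' le_rfl).2]
    · simp only [h1.not_gt, h1.ne', if_false]
      rw [(hh r h1.le).1, (hh r h1.le).2]
      exact hσ _ _ _ _ _ _ _ hh
  · intro T' L' hT hL hleg
    have hT2 : ∀ r' < r + 1, T' r' = Function.update T r (T' r) r' := by
      intro r' hr'
      by_cases e : r' = r
      · subst e; simp
      · rw [Function.update_of_ne e]; exact hT r' (by omega)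
    have hL2 : ∀ r' < r + 1, L' r' = Function.update L r (L' r) r' := by
      intro r' hr'
      by_cases e : r' = r
      · subst e; simp
      · rw [Function.update_of_ne e]; exact hL r' (by omega)
    obtain ⟨n, hn⟩ := hw (T' r) (L' r)
      (legal_congr (fun r' hr' => hT2 r' (by omega)) (hL2 r (by omega)) (hleg r)) T' L' hT2 hL2 hleg
    refine ⟨n, winAt_congr (fun _ _ => rfl) (fun _ _ => rfl) (fun r' _ => ?_) hn⟩
    rcases lt_trichotomy r' r with h1 | h1 | h1
    · simp [h1, h1.ne, Nat.lt_succ_of_lt h1]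
    · subst h1; simp
    · have : ¬ r' < r + 1 := by omega
      simp [h1.not_gt, h1.ne', this]

/-- Determinacy, in the direction needed: if `P_B` has no winning strategy then `P_A` has a causal
strategy `(AT, AL)` that plays legally and never lets `P_B` win. -/
theorem exists_forcing_strategy {H : Set (X → Y)} {xs : ℕ → X}
    (hno : ¬ ∃ σ : LCLLStrategy Y, LCLLCausal σ ∧ LCLLWinning H xs σ) :
    ∃ (AT : (ℕ → ℕ → Bool) → ℕ → ℕ → ℕ) (AL : (ℕ → ℕ → Bool) → ℕ → (ℕ → Bool) → ℕ → Y),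
      (∀ U U' : ℕ → ℕ → Bool, ∀ r, (∀ r' < r, U r' = U' r') →
        AT U r = AT U' r ∧ AL U r = AL U' r) ∧
      (∀ U r, LCLLLegal (AT U) (AL U) r) ∧
      (∀ U r, ¬ LCLLWinAt H xs (AT U) (AL U) U r) := by
  -- a failing play provides the label functions used as a starting point (`Y` may be empty)
  obtain ⟨L0⟩ : Nonempty (ℕ → (ℕ → Bool) → ℕ → Y) := by
    by_contra hemp
    exact hno ⟨_, causal_const, fun T L _ => absurd ⟨L⟩ hemp⟩
  have h0 : ∀ T L U, ¬ WinsFrom H xs 0 T L U := by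
    rintro T L U ⟨σ, hσ, hw⟩
    refine hno ⟨σ, hσ, fun T' L' hleg => ?_⟩
    obtain ⟨n, hn⟩ := hw T' L' (by simp) (by simp) hleg
    exact ⟨n, winAt_congr (fun _ _ => rfl) (fun _ _ => rfl) (fun r' _ => by simp) hn⟩
  have hstep : ∀ (r : ℕ) (T : ℕ → ℕ → ℕ) (L : ℕ → (ℕ → Bool) → ℕ → Y) (U : ℕ → ℕ → Bool),
      ∃ t : ℕ → ℕ, ∃ l : (ℕ → Bool) → ℕ → Y, ¬ WinsFrom H xs r T L U →
      LCLLLegal (Function.update T r t) (Function.update L r l) r ∧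
      ∀ u : ℕ → Bool, ¬ WinsFrom H xs (r + 1) (Function.update T r t) (Function.update L r l)
        (Function.update U r u) := by
    intro r T L U
    by_cases h : WinsFrom H xs r T L U
    · exact ⟨T r, L r, fun h' => absurd h h'⟩
    · obtain ⟨t, l, h1⟩ := exists_safe_move h
      exact ⟨t, l, fun _ => h1⟩
  choose t l htl using hstep
  -- the position before round `r` when `P_B` answers according to `U`
  let st : (ℕ → ℕ → Bool) → ℕ →
      (ℕ → ℕ → ℕ) × (ℕ → (ℕ → Bool) → ℕ → Y) × (ℕ → ℕ → Bool) := fun U r =>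
    Nat.rec (fun _ _ => 0, L0, fun _ _ => false) (fun r s =>
      (Function.update s.1 r (t r s.1 s.2.1 s.2.2), Function.update s.2.1 r (l r s.1 s.2.1 s.2.2),
        Function.update s.2.2 r (U r))) r
  have stS : ∀ U r, st U (r + 1) =
      (Function.update (st U r).1 r (t r (st U r).1 (st U r).2.1 (st U r).2.2),
        Function.update (st U r).2.1 r (l r (st U r).1 (st U r).2.1 (st U r).2.2),
        Function.update (st U r).2.2 r (U r)) := fun U r => rfl
  have hsafe : ∀ U r, ¬ WinsFrom H xs r (st U r).1 (st U r).2.1 (st U r).2.2 := by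
    intro U r
    induction r with
    | zero => exact h0 _ _ _
    | succ r ih => rw [stS]; exact (htl _ _ _ _ ih).2 _
  have hcong : ∀ U U' : ℕ → ℕ → Bool, ∀ r, (∀ r' < r, U r' = U' r') → st U r = st U' r := by
    intro U U' r h
    induction r with
    | zero => rfl
    | succ r ih =>
      rw [stS, stS, ih (fun r' hr' => h r' (by omega)), h r (by omega)]
  have hpre : ∀ U n r, r < n → (st U n).1 r = (st U (r + 1)).1 r ∧
      (st U n).2.1 r = (st U (r + 1)).2.1 r ∧ (st U n).2.2 r = U r := by
    intro U n r h
    induction n with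
    | zero => omega
    | succ n ih =>
      by_cases e : r = n
      · subst e
        refine ⟨rfl, rfl, ?_⟩
        rw [stS]; simp
      · rw [stS]
        simp only [Function.update_of_ne e]
        exact ih (by omega)
  let AT : (ℕ → ℕ → Bool) → ℕ → ℕ → ℕ := fun U r => (st U (r + 1)).1 r
  let AL : (ℕ → ℕ → Bool) → ℕ → (ℕ → Bool) → ℕ → Y := fun U r => (st U (r + 1)).2.1 r
  have hleg : ∀ U r, LCLLLegal (AT U) (AL U) r := by
    intro U r
    have h1 := (htl r _ _ _ (hsafe U r)).1
    refine legal_congr (T := (st U (r + 1)).1) (L := (st U (r + 1)).2.1) ?_ rfl h1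
    intro r' hr'
    exact (hpre U (r + 1) r' (by omega)).1
  refine ⟨AT, AL, ?_, hleg, ?_⟩
  · intro U U' r h
    -- only the `U`-component of the position after round `r` depends on `U r`
    simp only [AT, AL, stS, hcong U U' r h]
    simp
  · intro U r hwin
    refine hsafe U (r + 1) ⟨_, causal_const, fun T' L' hT hL _ => ⟨r, ?_⟩⟩
    refine winAt_congr (fun r' hr' => ?_) (fun r' hr' => ?_) (fun r' hr' => ?_) hwin
    · rw [hT r' (by omega)]; exact (hpre U (r + 1) r' (by omega)).1.symm
    · rw [hL r' (by omega)]; exact (hpre U (r + 1) r' (by omega)).2.1.symm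
    · have : r' < r + 1 := by omega
      simp only [this, if_true]
      exact (hpre U (r + 1) r' this).2.2.symm

end Determinacy

/-! ### BFS index of a node -/

/-- The number obtained from `s` by appending `j` binary digits from `b`. -/
def appendBits (b : ℕ → Bool) (s : ℕ) : ℕ → ℕ
  | 0 => s
  | j + 1 => 2 * appendBits b s j + (b j).toNat

/-- The BFS index of the depth-`k` node on the path `u`: the number whose binary expansion is a
leading `1` followed by the bits of the path. -/
def nodeIdx (u : ℕ → ℕ → Bool) : ℕ → ℕ
  | 0 => 1
  | m + 1 => appendBits (u m) (nodeIdx u m) (m + 1)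

lemma appendBits_congr {b b' : ℕ → Bool} (s j : ℕ) (h : ∀ i < j, b i = b' i) :
    appendBits b s j = appendBits b' s j := by
  induction j with
  | zero => rfl
  | succ j ih => simp only [appendBits]; rw [ih (fun i hi => h i (by omega)), h j (by omega)]

lemma appendBits_lt {b b' : ℕ → Bool} {s s' i : ℕ} (j : ℕ)
    (h : appendBits b s i < appendBits b' s' i) (hij : i ≤ j) :
    appendBits b s j < appendBits b' s' j := by
  induction j, hij using Nat.le_induction with
  | base => exact h
  | succ j _ ih =>
    simp only [appendBits]
    have := Bool.toNat_le (b j)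
    omega

lemma appendBits_bounds (b : ℕ → Bool) (s j : ℕ) :
    s * 2 ^ j ≤ appendBits b s j ∧ appendBits b s j + 1 ≤ (s + 1) * 2 ^ j := by
  induction j with
  | zero => simp [appendBits]
  | succ j ih =>
    simp only [appendBits, pow_succ]
    have := Bool.toNat_le (b j)
    constructor <;> nlinarith

lemma nodeIdx_congr {u u' : ℕ → ℕ → Bool} (k : ℕ) (h : ∀ m < k, ∀ j ≤ m, u m j = u' m j) :
    nodeIdx u k = nodeIdx u' k := by
  induction k with
  | zero => rfl
  | succ k ih =>
    simp only [nodeIdx]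
    rw [ih (fun m hm => h m (by omega))]
    exact appendBits_congr _ _ (fun i hi => h k (by omega) i (by omega))

/-- The two paths need not be related: a deeper node has a larger index because its binary expansion is
longer. -/
lemma nodeIdx_lt_of_depth_lt (u u' : ℕ → ℕ → Bool) {k k' : ℕ} (h : k < k') :
    nodeIdx u k < nodeIdx u' k' := by
  have hb : ∀ (v : ℕ → ℕ → Bool) (m : ℕ), 2 ^ (∑ i ∈ Finset.range m, (i + 1)) ≤ nodeIdx v m ∧
      nodeIdx v m + 1 ≤ 2 ^ (∑ i ∈ Finset.range m, (i + 1)) * 2 := by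
    intro v m
    induction m with
    | zero => simp [nodeIdx]
    | succ m ih =>
      have h1 := appendBits_bounds (v m) (nodeIdx v m) (m + 1)
      rw [Finset.sum_range_succ, pow_add]
      simp only [nodeIdx]
      have hp : 0 < 2 ^ (m + 1) := by positivity
      constructor <;> nlinarith
  have h1 := (hb u k).2
  have h2 := (hb u' k').1
  have h3 : (∑ i ∈ Finset.range k, (i + 1)) + 1 ≤ ∑ i ∈ Finset.range k', (i + 1) := by
    calc (∑ i ∈ Finset.range k, (i + 1)) + 1 ≤ ∑ i ∈ Finset.range (k + 1), (i + 1) := by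
          rw [Finset.sum_range_succ]; omega
      _ ≤ _ := Finset.sum_le_sum_of_subset (Finset.range_mono h)
  have h4 := Nat.pow_le_pow_right (n := 2) (by norm_num) h3
  rw [pow_succ] at h4
  omega

lemma nodeIdx_lt_of_pathLt {k : ℕ} {a b : ℕ → ℕ → Bool} (h : NodePathLt k a b) :
    nodeIdx a k < nodeIdx b k := by
  obtain ⟨m, hm, j, hj, ha, hb, heq⟩ := h
  have e1 : nodeIdx a m = nodeIdx b m :=
    nodeIdx_congr m (fun m' hm' j' hj' => heq m' (by omega) j' hj' (Or.inl hm'))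
  have e2 : appendBits (a m) (nodeIdx a m) j = appendBits (b m) (nodeIdx b m) j := by
    rw [e1]
    exact appendBits_congr _ _ (fun i hi => heq m hm i (by omega) (Or.inr ⟨rfl, hi⟩))
  have e3 : nodeIdx a (m + 1) < nodeIdx b (m + 1) := by
    refine appendBits_lt (i := j + 1) (m + 1) ?_ (by omega)
    simp only [appendBits, ha, hb, e2]
    simp
  have e4 : m + 1 ≤ k := hm
  clear heq hm
  induction k, e4 using Nat.le_induction with
  | base => exact e3
  | succ k _ ih => exact appendBits_lt (i := 0) (k + 1) (by simpa [appendBits] using ih) (by omega)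

lemma nodeIdx_lt_of_bfsLt {kv ku : ℕ} {uv uu : ℕ → ℕ → Bool} (h : NodeBFSLt kv uv ku uu) :
    nodeIdx uv kv < nodeIdx uu ku := by
  rcases h with h | ⟨rfl, h⟩
  · exact nodeIdx_lt_of_depth_lt _ _ h
  · exact nodeIdx_lt_of_pathLt h

lemma le_nodeIdx (u : ℕ → ℕ → Bool) (k : ℕ) : k ≤ nodeIdx u k :=
  (strictMono_nat_of_lt_succ fun k => nodeIdx_lt_of_depth_lt u u k.lt_succ_self).le_apply

/-! ### The plays attached to the branches of the tree -/

lemma legal_strictMonoOn {Y : Type*} {T : ℕ → ℕ → ℕ} {L : ℕ → (ℕ → Bool) → ℕ → Y} {r : ℕ}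
    (h : LCLLLegal T L r) {i j : ℕ} (hij : i < j) (hj : j ≤ r) : T r i < T r j := by
  induction j, (show i + 1 ≤ j from hij) using Nat.le_induction with
  | base => exact h.2.1 i (by omega)
  | succ j hj' ih => exact (ih (by omega) (by omega)).trans (h.2.1 j (by omega))

lemma legal_monoOn {Y : Type*} {T : ℕ → ℕ → ℕ} {L : ℕ → (ℕ → Bool) → ℕ → Y} {r : ℕ}
    (h : LCLLLegal T L r) {i j : ℕ} (hij : i ≤ j) (hj : j ≤ r) : T r i ≤ T r j := by
  rcases hij.eq_or_lt with rfl | h'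
  · rfl
  · exact (legal_strictMonoOn h h' hj).le

lemma le_gStart {Y : Type*} {T : ℕ → ℕ → ℕ} {L : ℕ → (ℕ → Bool) → ℕ → Y}
    (h : ∀ r, LCLLLegal T L r) (r : ℕ) : r ≤ gStart T r := by
  induction r with
  | zero => simp
  | succ r ih =>
    have h1 := (h r).1
    have h2 := legal_monoOn (h r) (Nat.zero_le r) le_rfl
    simp only [gStart, Nat.succ_ne_zero, if_false, Nat.add_sub_cancel]
    exact Nat.succ_le_succ (ih.trans (h1.trans h2))

lemma exists_round {T : ℕ → ℕ → ℕ} {r p : ℕ} (hp : p < gStart T r) :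
    ∃ r' < r, gStart T r' ≤ p ∧ p ≤ T r' r' := by
  induction r with
  | zero => simp [gStart] at hp
  | succ r ih =>
    by_cases h : p < gStart T r
    · obtain ⟨r', h1, h2⟩ := ih h
      exact ⟨r', by omega, h2⟩
    · refine ⟨r, by omega, by omega, ?_⟩
      simp only [gStart, Nat.succ_ne_zero, if_false, Nat.add_sub_cancel] at hp
      omega

/-- The answers of `P_B` along the path `u` of the tree: the depth-`m` node is played at round
`ρ (nodeIdx u m)`, where the first `m + 1` bits are `u m 0, …, u m m`; all other bits are
`false`. -/
def pathPlay (ρ : ℕ → ℕ) (u : ℕ → ℕ → Bool) (r : ℕ) (j : ℕ) : Bool :=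
  decide (∃ m, r = ρ (nodeIdx u m) ∧ j ≤ m ∧ u m j = true)

lemma pathPlay_node {ρ : ℕ → ℕ} (hρ : StrictMono ρ) (u : ℕ → ℕ → Bool) {m j : ℕ} (hj : j ≤ m) :
    pathPlay ρ u (ρ (nodeIdx u m)) j = u m j := by
  have inj : ∀ m', ρ (nodeIdx u m) = ρ (nodeIdx u m') → m = m' := fun m' h =>
    (strictMono_nat_of_lt_succ fun k => nodeIdx_lt_of_depth_lt u u k.lt_succ_self).injective
      (hρ.injective h)
  rw [Bool.eq_iff_iff, pathPlay, decide_eq_true_iff]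
  constructor
  · rintro ⟨m', h1, -, h3⟩
    rw [inj m' h1]; exact h3
  · exact fun h => ⟨m, rfl, hj, h⟩

lemma pathPlay_of_lt {ρ : ℕ → ℕ} (hρ : StrictMono ρ) (u : ℕ → ℕ → Bool) {r j : ℕ} (h : r < j) :
    pathPlay ρ u r j = false := by
  rw [pathPlay, decide_eq_false_iff_not]
  rintro ⟨m, h1, h2, -⟩
  have := le_nodeIdx u m
  have := hρ.le_apply (x := nodeIdx u m)
  omega

lemma pathPlay_congr {ρ : ℕ → ℕ} (hρ : StrictMono ρ) {u u' : ℕ → ℕ → Bool} {k : ℕ}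
    (h : ∀ m < k, ∀ j ≤ m, u m j = u' m j) {r : ℕ} (hr : r < ρ (nodeIdx u k)) :
    pathPlay ρ u r = pathPlay ρ u' r := by
  have aux : ∀ v v' : ℕ → ℕ → Bool, (∀ m < k, ∀ j ≤ m, v m j = v' m j) → r < ρ (nodeIdx v k) →
      ∀ j, pathPlay ρ v r j = true → pathPlay ρ v' r j = true := by
    intro v v' hv hr j hj
    rw [pathPlay, decide_eq_true_iff] at hj ⊢
    obtain ⟨m, h1, h2, h3⟩ := hj
    have hm : m < k := by
      by_contra hcon
      have h4 : nodeIdx v k ≤ nodeIdx v m :=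
        (strictMono_nat_of_lt_succ fun k => nodeIdx_lt_of_depth_lt v v k.lt_succ_self).monotone
          (not_lt.1 hcon)
      have := hρ.monotone h4
      omega
    exact ⟨m, by rw [h1, nodeIdx_congr m (fun m' hm' => hv m' (by omega))], h2,
      by rw [← hv m hm j h2]; exact h3⟩
  funext j
  rw [Bool.eq_iff_iff]
  exact ⟨aux u u' h hr j, aux u' u (fun m hm j hj => (h m hm j hj).symm)
    (by rw [← nodeIdx_congr k h]; exact hr) j⟩

/-- A causal quantity at round `r` is bounded over all answers of `P_B` that use, at each round,
only the bits offered there, since there are finitely many such histories. -/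
lemma exists_round_bound (F : (ℕ → ℕ → Bool) → ℕ → ℕ)
    (hF : ∀ U U' : ℕ → ℕ → Bool, ∀ r, (∀ r' < r, U r' = U' r') → F U r = F U' r) (r : ℕ) :
    ∃ B, ∀ U : ℕ → ℕ → Bool, (∀ r' j, r' < j → U r' j = false) → F U r ≤ B := by
  let ext : (Fin r → Fin r → Bool) → ℕ → ℕ → Bool := fun f a b =>
    if h : a < r ∧ b < r then f ⟨a, h.1⟩ ⟨b, h.2⟩ else false
  refine ⟨Finset.univ.sup fun f => F (ext f) r, fun U hU => ?_⟩
  have e : F U r = F (ext fun a b => U a b) r := by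
    refine hF _ _ _ (fun r' hr' => ?_)
    funext j
    by_cases hj : j < r
    · simp [ext, hr', hj]
    · simp only [ext, hj, and_false, dif_neg, not_false_eq_true]
      exact hU r' j (by omega)
  rw [e]
  exact Finset.le_sup (f := fun f => F (ext f) r)
    (Finset.mem_univ (fun a b : Fin r => U a b))

/-- The path `u` cut after the bits of level `n`. -/
def truncPath (n : ℕ) (u : ℕ → ℕ → Bool) (m j : ℕ) : Bool :=
  if m ≤ n ∧ j ≤ m then u m j else false

lemma truncPath_eq (n : ℕ) (u : ℕ → ℕ → Bool) {m j : ℕ} (hm : m ≤ n) (hj : j ≤ m) :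
    truncPath n u m j = u m j := by
  simp [truncPath, hm, hj]

/-! ### From a strategy of the first player to an indifferent tree -/

/-- A causal strategy of `P_A` against which `P_B` never wins gives an infinite indifferent tree:
node `u` of depth `k` carries the first `k + 1` branch points of round `ρ (nodeIdx u k) ≥ k`. -/
theorem hasInfIndiff_of_forcing {X Y : Type*} {H : Set (X → Y)} {xs : ℕ → X}
    (AT : (ℕ → ℕ → Bool) → ℕ → ℕ → ℕ) (AL : (ℕ → ℕ → Bool) → ℕ → (ℕ → Bool) → ℕ → Y)
    (hcaus : ∀ U U' : ℕ → ℕ → Bool, ∀ r, (∀ r' < r, U r' = U' r') →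
        AT U r = AT U' r ∧ AL U r = AL U' r)
    (hleg : ∀ U r, LCLLLegal (AT U) (AL U) r)
    (hsafe : ∀ U r, ¬ LCLLWinAt H xs (AT U) (AL U) U r) : HasInfIndiffLCLLTree H := by
  choose G hG using exists_round_bound (fun U r => AT U r r)
    (fun U U' r h => by rw [(hcaus U U' r h).1])
  let ρ : ℕ → ℕ := fun n => Nat.rec 0 (fun _ a => a + G a + 1) n
  have ρS : ∀ n, ρ (n + 1) = ρ n + G (ρ n) + 1 := fun n => rfl
  have hρ : StrictMono ρ := strictMono_nat_of_lt_succ (fun n => by rw [ρS]; omega)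
  have hGρ : ∀ {a b : ℕ}, a < b → G (ρ a) < ρ b := fun {a b} hab => by
    have := hρ.monotone (show a + 1 ≤ b from hab)
    rw [ρS] at this; omega
  let P := pathPlay ρ
  -- the round at which a node is played
  let R : ℕ → (ℕ → ℕ → Bool) → ℕ := fun k u => ρ (nodeIdx u k)
  have hkR : ∀ k u, k ≤ R k u := fun k u => (le_nodeIdx u k).trans hρ.le_apply
  have hRmono : ∀ {k n : ℕ} u, k ≤ n → R k u ≤ R n u := fun {k n} u hkn =>
    hρ.monotone ((strictMono_nat_of_lt_succ
      fun k => nodeIdx_lt_of_depth_lt u u k.lt_succ_self).monotone hkn)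
  have hR : ∀ k u u', (∀ m < k, ∀ j ≤ m, u m j = u' m j) → R k u = R k u' := fun k u u' h => by
    simp only [R, nodeIdx_congr k h]
  have hA : ∀ k u u', (∀ m < k, ∀ j ≤ m, u m j = u' m j) → ∀ r ≤ R k u,
      AT (P u) r = AT (P u') r ∧ AL (P u) r = AL (P u') r := fun k u u' h r hr =>
    hcaus _ _ _ (fun r' hr' => pathPlay_congr hρ h (hr'.trans_le hr))
  let x : ℕ → (ℕ → ℕ → Bool) → ℕ → X := fun k u i => xs (AT (P u) (R k u) i)
  let y : ℕ → (ℕ → ℕ → Bool) → ℕ → Y := fun k u i =>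
    AL (P u) (R k u) (P u (R k u)) (AT (P u) (R k u) i)
  have hx : ∀ k : ℕ, ∀ u u' : ℕ → ℕ → Bool,
      (∀ m < k, ∀ j ≤ m, u m j = u' m j) → ∀ i ≤ k, x k u i = x k u' i := by
    intro k u u' h i _
    simp only [x, ← hR k u u' h, (hA k u u' h _ le_rfl).1]
  have hrange : ∀ k u i, i ≤ k → gStart (AT (P u)) (R k u) ≤ AT (P u) (R k u) i ∧
      AT (P u) (R k u) i ≤ AT (P u) (R k u) (R k u) := by
    intro k u i hi
    have h1 := hkR k u
    exact ⟨(hleg (P u) (R k u)).1.trans (legal_monoOn (hleg _ _) (Nat.zero_le _) (by omega)),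
      legal_monoOn (hleg _ _) (by omega) le_rfl⟩
  have hy : ∀ k i : ℕ, i ≤ k → ∀ u u' : ℕ → ℕ → Bool,
      (∀ m < k, ∀ j ≤ m, u m j = u' m j) → (∀ j ≤ i, u k j = u' k j) →
      y k u i = y k u' i := by
    intro k i hi u u' h h'
    have e1 := hR k u u' h
    obtain ⟨e2, e3⟩ := hA k u u' h _ le_rfl
    have h1 := hkR k u
    simp only [y, ← e1, ← e2, ← e3]
    refine (hleg (P u) (R k u)).2.2.1 _ (hrange k u i hi).1 (hrange k u i hi).2 _ _ ?_
    intro j hj hle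
    have hji : j ≤ i := by
      by_contra hcon
      exact absurd (legal_strictMonoOn (hleg (P u) (R k u)) (not_le.1 hcon) hj) (not_lt.2 hle)
    have p1 : P u (R k u) j = u k j := pathPlay_node hρ u (hji.trans hi)
    have p2 : P u' (R k u') j = u' k j := pathPlay_node hρ u' (hji.trans hi)
    rw [p1, e1, p2, h' j hji]
  have hne : ∀ k i : ℕ, i ≤ k → ∀ u u' : ℕ → ℕ → Bool,
      (∀ m < k, ∀ j ≤ m, u m j = u' m j) → (∀ j < i, u k j = u' k j) →
      u k i ≠ u' k i → y k u i ≠ y k u' i := by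
    intro k i hi u u' h h' hdiff
    have e1 := hR k u u' h
    obtain ⟨e2, e3⟩ := hA k u u' h _ le_rfl
    have h1 := hkR k u
    have p1 : ∀ j ≤ k, P u (R k u) j = u k j := fun j hj => pathPlay_node hρ u hj
    have p2 : ∀ j ≤ k, P u' (R k u) j = u' k j := fun j hj => by
      rw [e1]; exact pathPlay_node hρ u' hj
    simp only [y, ← e1, ← e2, ← e3]
    refine (hleg (P u) (R k u)).2.2.2 i (by omega) _ _ ?_ ?_
    · intro j hj hlt
      have hji : j < i := by
        by_contra hcon
        exact absurd (legal_monoOn (hleg (P u) (R k u)) (not_lt.1 hcon) hj) (not_le.2 hlt)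
      rw [p1 j (by omega), p2 j (by omega), h' j hji]
    · rw [p1 i hi, p2 i hi]; exact hdiff
  have hcons : ∀ n u, ∃ c ∈ H, ∀ r' ≤ R n u, ∀ p : ℕ, gStart (AT (P u)) r' ≤ p →
      p ≤ AT (P u) r' r' → c (xs p) = AL (P u) r' (P u r') p := fun n u => by
    have h := hsafe (P u) (R n u)
    unfold LCLLWinAt at h
    exact not_not.1 h
  have hreal : ∀ n u (c : X → Y), (∀ r' ≤ R n u, ∀ p : ℕ, gStart (AT (P u)) r' ≤ p →
      p ≤ AT (P u) r' r' → c (xs p) = AL (P u) r' (P u r') p) →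
      ∀ k ≤ n, ∀ i ≤ k, c (x k u i) = y k u i := fun n u c hc k hk i hi =>
    hc (R k u) (hRmono u hk) _ (hrange k u i hi).1 (hrange k u i hi).2
  refine ⟨x, y, ⟨hx, hy, hne, fun u n => ?_⟩, ?_⟩
  · obtain ⟨c, hcH, hc⟩ := hcons n u
    exact ⟨c, hcH, hreal n u c hc⟩
  choose c hcH hc using hcons
  refine ⟨fun n u => c n (truncPath n u), fun n u => hcH _ _, ?_, ?_, ?_⟩
  · intro n u u' h
    have : truncPath n u = truncPath n u' := by
      funext m j
      unfold truncPath
      split_ifs with hm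
      · exact h m hm.1 j hm.2
      · rfl
    simp only [this]
  · intro n u k hk i hi
    have h1 := hreal n _ _ (hc n (truncPath n u)) k hk i hi
    rw [hx k (truncPath n u) u (fun m hm j hj => truncPath_eq n u (by omega) hj) i hi,
      hy k i hi (truncPath n u) u (fun m hm j hj => truncPath_eq n u (by omega) hj)
        (fun j hj => truncPath_eq n u hk (by omega))] at h1
    exact h1
  · intro kv ku kw uv uu uw hlt hdesc i hi
    beta_reduce
    have a1 : ∀ m < ku, ∀ j ≤ m, truncPath ku uu m j = uu m j :=
      fun m hm j hj => truncPath_eq ku uu hm.le hj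
    have hag : ∀ m < ku, ∀ j ≤ m, truncPath ku uu m j = truncPath kw uw m j := by
      intro m hm j hj
      rw [a1 m hm j hj, truncPath_eq kw uw (hm.le.trans hdesc.1) hj]
      exact hdesc.2 m hm j hj
    generalize truncPath kw uw = w at hag ⊢
    have hidx : nodeIdx (truncPath ku uu) ku = nodeIdx uu ku := nodeIdx_congr ku a1
    generalize truncPath ku uu = v at hag hidx ⊢
    -- the instance of the earlier node lies before the start of the round of the later one
    have hp : AT (P uv) (R kv uv) i < gStart (AT (P v)) (R ku v) := by
      calc AT (P uv) (R kv uv) i ≤ AT (P uv) (R kv uv) (R kv uv) := (hrange kv uv i hi).2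
        _ ≤ G (R kv uv) := hG _ _ (fun r' j h => pathPlay_of_lt hρ uv h)
        _ < R ku v := hGρ (by rw [hidx]; exact nodeIdx_lt_of_bfsLt hlt)
        _ ≤ _ := le_gStart (hleg (P v)) _
    obtain ⟨r', hr', hp1, hp2⟩ := exists_round hp
    have hRw : R ku v ≤ R kw w := by rw [hR ku v w hag]; exact hRmono w hdesc.1
    have hA' := hA ku v w hag
    have hPr : P v r' = P w r' := pathPlay_congr hρ hag hr'
    change c ku v (xs _) = c kw w (xs _)
    rw [hc ku v r' hr'.le _ hp1 hp2, hc kw w r' (hr'.le.trans hRw) _ ?_ ?_,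
      (hA' r' hr'.le).2, hPr]
    · rw [gStart_congr (fun s hs => ((hA' s (hs.le.trans hr'.le)).1).symm)]; exact hp1
    · rw [← (hA' r' hr'.le).1]; exact hp2

/-- If `H` has no infinite indifferent LCLL tree, then for every
instance sequence the player `P_B` has a winning strategy in the LCLL game. -/
theorem statement4 {X Y : Type*} [Countable Y] (H : Set (X → Y))
    (hH : ¬ HasInfIndiffLCLLTree H) (xs : ℕ → X) :
    ∃ σ : LCLLStrategy Y, LCLLCausal σ ∧ LCLLWinning H xs σ := by
  by_contra hno
  obtain ⟨AT, AL, hcaus, hleg, hsafe⟩ := exists_forcing_strategy hno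
  exact hH (hasInfIndiff_of_forcing AT AL hcaus hleg hsafe)
end
end

section
/- Let 𝒳 be a set, 𝒴 a countable set, and ℋ ⊆ 𝒴^𝒳 a concept class. If ℋ has no infinite indifferent Littlestone tree, then for every instance sequence 𝕏 = (X_t)_{t≥1} in 𝒳, player P_B has a winning strategy in the Littlestone game on ℋ and 𝕏. -/
/-!
The Littlestone game is an open game for `P_B` (once `P_B` has won, this is visible at a finite
round), so it is determined. A position is recorded as a pair `(V, n)`: the set `V` of concepts
consistent with the labels fixed so far, and the number `n` of instances already labelled.

*`P_B` wins from `(H, 0)`.* A winning strategy is encoded as a well-founded tree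
(`StratTree`, `StratTree.Wins`): each node answers every move of `P_A` and hands over to a subtree,
and leaves sit at positions with `V = ∅`. Walking down such a tree during a play is a causal
strategy, and well-foundedness of the tree makes it reach a leaf (`exists_litWinAt_of_wins`).

*`P_B` has no such tree from `(H, 0)`.* Then from each lost position `P_A` has a move both of whose
answers are lost again (`exists_move_of_lost`), and `V ≠ ∅` at lost positions. Binary strings are
numbered in breadth-first order by `heapIdx` (root `1`, children `2m` and `2m + 1`), and lost
positions `φ m` are chosen recursively: `φ (2m + b)` is reached from `φ m` by letting `P_A` move
and `P_B` answer `b`, and then continuing the play until every instance used at an earlier node is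
already labelled (`exists_bfs_embedding`). The node `m` of the tree carries the last instance of
the move of `P_A` at `φ m`, and its concept is any element of the version space of `φ m`. The
concepts at all descendants of `m` lie in that version space, whose elements agree on all instances
labelled so far, in particular on those of the nodes preceding `m`. So this tree is indifferent.
-/

open Filter MeasureTheory
open scoped ENNReal

attribute [local instance] Classical.propDecidable

noncomputable section


/-- Start position of round `r` of the Littlestone game (positions are 0-indexed). -/
def gStart1 (T : ℕ → ℕ) (r : ℕ) : ℕ := if r = 0 then 0 else T (r - 1) + 1

/-- Legality of `P_A`'s move at round `r` of the Littlestone game: a new end position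
`T r ≥ gStart1 T r` and two candidate label sequences `L r false` and `L r true` for the
positions `gStart1 T r ≤ p ≤ T r`, agreeing except in the last label. -/
def LitLegal {Y : Type*} (T : ℕ → ℕ) (L : ℕ → Bool → ℕ → Y) (r : ℕ) : Prop :=
  gStart1 T r ≤ T r ∧
  (∀ p : ℕ, gStart1 T r ≤ p → p < T r → L r false p = L r true p) ∧
  L r false (T r) ≠ L r true (T r)

/-- `P_B` (whose choices are `U`) has won by round `r`: no concept in `H` is consistent
with all the labels fixed so far. -/
def LitWinAt {X Y : Type*} (H : Set (X → Y)) (xs : ℕ → X) (T : ℕ → ℕ)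
    (L : ℕ → Bool → ℕ → Y) (U : ℕ → Bool) (r : ℕ) : Prop :=
  ¬ ∃ h ∈ H, ∀ r' ≤ r, ∀ p : ℕ, gStart1 T r' ≤ p → p ≤ T r' → h (xs p) = L r' (U r') p

/-- A strategy for `P_B` in the Littlestone game. -/
abbrev LitStrategy (Y : Type*) := ℕ → (ℕ → ℕ) → (ℕ → Bool → ℕ → Y) → Bool

/-- The strategy only looks at the moves made up to the current round. -/
def LitCausal {Y : Type*} (σ : LitStrategy Y) : Prop :=
  ∀ r : ℕ, ∀ T T' : ℕ → ℕ, ∀ L L' : ℕ → Bool → ℕ → Y,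
    (∀ r' ≤ r, T r' = T' r' ∧ L r' = L' r') → σ r T L = σ r T' L'

/-- `σ` is a winning strategy for `P_B`: along every infinite legal play in which `P_B`
follows `σ`, `P_B` wins at some finite round. -/
def LitWinning {X Y : Type*} (H : Set (X → Y)) (xs : ℕ → X) (σ : LitStrategy Y) : Prop :=
  ∀ T : ℕ → ℕ, ∀ L : ℕ → Bool → ℕ → Y,
    (∀ r, LitLegal T L r) → ∃ r, LitWinAt H xs T L (fun r' => σ r' T L) r

/-! ### Positions and well-founded strategies for `P_B` -/

/-- A move of `P_A`: the new end position and the two candidate label sequences. -/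
abbrev LitMove (Y : Type*) := ℕ × (Bool → ℕ → Y)

/-- Legality of a move of `P_A` when the positions `p < n` are already labelled. -/
def LitMove.Legal {Y : Type*} (m : LitMove Y) (n : ℕ) : Prop :=
  n ≤ m.1 ∧ (∀ p : ℕ, n ≤ p → p < m.1 → m.2 false p = m.2 true p) ∧ m.2 false m.1 ≠ m.2 true m.1

/-- The version space after `P_A` plays `m` at `(V, n)` and `P_B` answers `b`. -/
def versionStep {X Y : Type*} (xs : ℕ → X) (V : Set (X → Y)) (n : ℕ) (m : LitMove Y) (b : Bool) :
    Set (X → Y) :=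
  {h ∈ V | ∀ p, n ≤ p → p ≤ m.1 → h (xs p) = m.2 b p}

/-- A well-founded strategy for `P_B`. A node answers each move of `P_A` by a bit (first field) and
passes to a subtree (second field); a leaf is meant for positions that are already won. -/
inductive StratTree (Y : Type*)
  | leaf : StratTree Y
  | node : (LitMove Y → Bool) → (LitMove Y → StratTree Y) → StratTree Y

namespace StratTree

/-- The answer of a strategy to a move; at a leaf it is irrelevant. -/
def answer {Y : Type*} : StratTree Y → LitMove Y → Bool
  | leaf, _ => false
  | node f _, m => f m

/-- What remains of a strategy after a move of `P_A`. -/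
def tail {Y : Type*} : StratTree Y → LitMove Y → StratTree Y
  | leaf, _ => leaf
  | node _ g, m => g m

/-- `t` wins from `(V, n)`: following `t`, every sequence of legal moves reaches a leaf at a
position whose version space is empty. -/
def Wins {X Y : Type*} (xs : ℕ → X) : StratTree Y → Set (X → Y) → ℕ → Prop
  | leaf, V, _ => V = ∅
  | node f g, V, n => ∀ m : LitMove Y, m.Legal n →
      Wins xs (g m) (versionStep xs V n m (f m)) (m.1 + 1)

/-- What remains of the strategy `t` at the start of round `r`. -/
def state {Y : Type*} (t : StratTree Y) (T : ℕ → ℕ) (L : ℕ → Bool → ℕ → Y) : ℕ → StratTree Y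
  | 0 => t
  | r + 1 => (state t T L r).tail (T r, L r)

/-- The strategy in the Littlestone game that walks down the tree `t`. -/
def toStrategy {Y : Type*} (t : StratTree Y) : LitStrategy Y :=
  fun r T L => (t.state T L r).answer (T r, L r)

theorem state_congr {Y : Type*} (t : StratTree Y) {T T' : ℕ → ℕ} {L L' : ℕ → Bool → ℕ → Y} (r : ℕ)
    (h : ∀ r' < r, T r' = T' r' ∧ L r' = L' r') : t.state T L r = t.state T' L' r := by
  induction r with
  | zero => rfl
  | succ r ih =>
    simp only [state]
    rw [ih fun r' hr' => h r' (by omega), (h r (by omega)).1, (h r (by omega)).2]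

theorem litCausal_toStrategy {Y : Type*} (t : StratTree Y) : LitCausal t.toStrategy := by
  intro r T T' L L' h
  simp only [toStrategy]
  rw [t.state_congr r fun r' hr' => h r' hr'.le, (h r le_rfl).1, (h r le_rfl).2]

/-- The version space at the start of round `r` of a play. -/
def versionAt {X Y : Type*} (H : Set (X → Y)) (xs : ℕ → X) (T : ℕ → ℕ) (L : ℕ → Bool → ℕ → Y)
    (U : ℕ → Bool) (r : ℕ) : Set (X → Y) :=
  {h ∈ H | ∀ r' < r, ∀ p : ℕ, gStart1 T r' ≤ p → p ≤ T r' → h (xs p) = L r' (U r') p}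

theorem versionAt_succ {X Y : Type*} (H : Set (X → Y)) (xs : ℕ → X) (T : ℕ → ℕ)
    (L : ℕ → Bool → ℕ → Y) (U : ℕ → Bool) (r : ℕ) :
    versionAt H xs T L U (r + 1) =
      versionStep xs (versionAt H xs T L U r) (gStart1 T r) (T r, L r) (U r) := by
  ext h
  simp only [versionAt, versionStep, Set.mem_ofPred_eq, Nat.lt_succ_iff_lt_or_eq, or_imp,
    forall_and, forall_eq, and_assoc]

/-- If, at the start of some round, the remaining strategy wins from the current position, then
`P_B` wins the play. The induction on the remaining tree is where well-foundedness enters. -/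
theorem exists_litWinAt_of_wins {X Y : Type*} (H : Set (X → Y)) (xs : ℕ → X) (t : StratTree Y)
    (T : ℕ → ℕ) (L : ℕ → Bool → ℕ → Y) (hL : ∀ r, LitLegal T L r) (s : StratTree Y) :
    ∀ r, t.state T L r = s →
      s.Wins xs (versionAt H xs T L (fun r' => t.toStrategy r' T L) r) (gStart1 T r) →
      ∃ r, LitWinAt H xs T L (fun r' => t.toStrategy r' T L) r := by
  induction s with
  | leaf =>
    rintro r - hW
    refine ⟨r, ?_⟩
    rintro ⟨h, hH, hc⟩
    have : h ∈ (∅ : Set (X → Y)) := hW ▸ ⟨hH, fun r' hr' => hc r' hr'.le⟩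
    exact this
  | node f g ih =>
    intro r hs hW
    refine ih (T r, L r) (r + 1) (by simp [state, hs, tail]) ?_
    have := hW (T r, L r) (hL r)
    rw [versionAt_succ]
    simpa [gStart1, toStrategy, hs, answer] using this

theorem litWinning_toStrategy {X Y : Type*} (H : Set (X → Y)) (xs : ℕ → X) (t : StratTree Y)
    (ht : t.Wins xs H 0) : LitWinning H xs t.toStrategy := by
  intro T L hL
  refine exists_litWinAt_of_wins H xs t T L hL t 0 rfl ?_
  simpa [versionAt, gStart1] using ht

end StratTree

/-! ### Lost positions -/

/-- At a position without a winning tree, the version space is nonempty and `P_A` has a legal move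
after which `P_B` has no winning tree either, whatever the answer. Otherwise the subtrees that win
after each move could be glued into a winning tree. -/
theorem exists_move_of_lost {X Y : Type*} (xs : ℕ → X) (V : Set (X → Y)) (n : ℕ)
    (hV : ¬ ∃ t : StratTree Y, t.Wins xs V n) :
    V.Nonempty ∧ ∃ m : LitMove Y, m.Legal n ∧
      ∀ b, ¬ ∃ t : StratTree Y, t.Wins xs (versionStep xs V n m b) (m.1 + 1) := by
  refine ⟨Set.nonempty_iff_ne_empty.2 fun h => hV ⟨.leaf, h⟩, ?_⟩
  by_contra! hc
  have : ∀ m : LitMove Y, ∃ b, ∃ t : StratTree Y,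
      m.Legal n → t.Wins xs (versionStep xs V n m b) (m.1 + 1) := by
    intro m
    by_cases hm : m.Legal n
    · obtain ⟨b, t, ht⟩ := hc m hm
      exact ⟨b, t, fun _ => ht⟩
    · exact ⟨false, .leaf, fun h => absurd h hm⟩
  choose f g hfg using this
  exact hV ⟨.node f g, hfg⟩

/-- A position `(V, n)` lost for `P_B`, with version space inside `H`. The concepts in `V` agree on
the instances labelled so far, as holds at every position reachable in the game. -/
structure LostPos {X Y : Type*} (H : Set (X → Y)) (xs : ℕ → X) where
  V : Set (X → Y)
  n : ℕ
  subset : V ⊆ H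
  agree : ∀ h ∈ V, ∀ h' ∈ V, ∀ s < n, h (xs s) = h' (xs s)
  lost : ¬ ∃ t : StratTree Y, t.Wins xs V n

namespace LostPos

variable {X Y : Type*} {H : Set (X → Y)} {xs : ℕ → X}

/-- A move of `P_A` that keeps the position lost. -/
def move (P : LostPos H xs) : LitMove Y := (exists_move_of_lost xs P.V P.n P.lost).2.choose

theorem legal_move (P : LostPos H xs) : P.move.Legal P.n :=
  (exists_move_of_lost xs P.V P.n P.lost).2.choose_spec.1

/-- The position after `P_A` plays `P.move` and `P_B` answers `b`. -/
def next (P : LostPos H xs) (b : Bool) : LostPos H xs where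
  V := versionStep xs P.V P.n P.move b
  n := P.move.1 + 1
  subset := fun _ h => P.subset h.1
  agree := by
    rintro h ⟨hV, hh⟩ h' ⟨hV', hh'⟩ s hs
    rcases lt_or_ge s P.n with hn | hn
    · exact P.agree h hV h' hV' s hn
    · rw [hh s hn (by omega), hh' s hn (by omega)]
  lost := (exists_move_of_lost xs P.V P.n P.lost).2.choose_spec.2 b

theorem next_subset (P : LostPos H xs) (b : Bool) : (P.next b).V ⊆ P.V := fun _ h => h.1

theorem apply_of_mem_next (P : LostPos H xs) (b : Bool) {h : X → Y} (hh : h ∈ (P.next b).V) :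
    h (xs P.move.1) = P.move.2 b P.move.1 :=
  hh.2 _ P.legal_move.1 le_rfl

/-- A play at a lost position can be continued inside lost positions past any time `N`. -/
theorem exists_extension (P : LostPos H xs) (N : ℕ) :
    ∃ Q : LostPos H xs, Q.V ⊆ P.V ∧ N ≤ Q.n := by
  induction N with
  | zero => exact ⟨P, subset_rfl, Nat.zero_le _⟩
  | succ N ih =>
    obtain ⟨Q, hQ, hN⟩ := ih
    exact ⟨Q.next false, (Q.next_subset false).trans hQ,
      Nat.succ_le_succ (hN.trans Q.legal_move.1)⟩

/-- Lost positions indexed by the nodes of the binary tree in heap order, with `2m` and `2m + 1` the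
children of `m`. The index `0` only serves as a formal parent of the root `1`. -/
def bfs (P : LostPos H xs) (m : ℕ) : LostPos H xs :=
  if hm : m = 0 then P else
    (((bfs P (m / 2)).next m.bodd).exists_extension
      (Finset.univ.sup fun k : Fin m => (bfs P k).move.1 + 1)).choose
termination_by m
decreasing_by
  all_goals first | exact Fin.isLt _ | omega

/-- Each chosen position comes after the corresponding answer at its parent, and after all instances
used by nodes preceding it in breadth-first order have been labelled. -/
theorem exists_bfs_embedding (P : LostPos H xs) :
    ∃ φ : ℕ → LostPos H xs, ∀ m, m ≠ 0 →
      (φ m).V ⊆ ((φ (m / 2)).next m.bodd).V ∧ ∀ k < m, (φ k).move.1 < (φ m).n := by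
  refine ⟨P.bfs, fun m hm => ?_⟩
  have hspec := (((bfs P (m / 2)).next m.bodd).exists_extension
      (Finset.univ.sup fun k : Fin m => (bfs P k).move.1 + 1)).choose_spec
  have heq : P.bfs m = (((bfs P (m / 2)).next m.bodd).exists_extension
      (Finset.univ.sup fun k : Fin m => (bfs P k).move.1 + 1)).choose := by
    rw [bfs, dif_neg hm]
  rw [← heq] at hspec
  refine ⟨hspec.1, fun k hk => Nat.lt_of_succ_le (le_trans ?_ hspec.2)⟩
  exact Finset.le_sup (f := fun k : Fin m => (bfs P k).move.1 + 1) (Finset.mem_univ ⟨k, hk⟩)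

end LostPos

/-! ### Breadth-first numbering of binary strings -/

/-- The position of a binary string in breadth-first order, counted from `1`. -/
def heapIdx (u : List Bool) : ℕ := 2 ^ u.length + bitVal u

theorem bitVal_concat (u : List Bool) (b : Bool) :
    bitVal (u ++ [b]) = 2 * bitVal u + cond b 1 0 := by
  simp [bitVal]

theorem bitVal_lt (u : List Bool) : bitVal u < 2 ^ u.length := by
  induction u using List.reverseRecOn with
  | nil => simp [bitVal]
  | append_singleton u b ih =>
    rw [bitVal_concat, List.length_append, List.length_singleton, pow_succ]
    cases b <;> simp <;> omega

theorem heapIdx_ne_zero (u : List Bool) : heapIdx u ≠ 0 := by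
  simp [heapIdx]

theorem heapIdx_concat (u : List Bool) (b : Bool) :
    heapIdx (u ++ [b]) = 2 * heapIdx u + cond b 1 0 := by
  rw [heapIdx, heapIdx, bitVal_concat, List.length_append, List.length_singleton, pow_succ]
  ring

theorem heapIdx_concat_div (u : List Bool) (b : Bool) : heapIdx (u ++ [b]) / 2 = heapIdx u := by
  rw [heapIdx_concat]
  cases b <;> simp; omega

theorem heapIdx_concat_bodd (u : List Bool) (b : Bool) : (heapIdx (u ++ [b])).bodd = b := by
  rw [heapIdx_concat]
  cases b <;> simp

theorem heapIdx_lt {v u : List Bool} (h : ListBFSLt v u) : heapIdx v < heapIdx u := by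
  unfold heapIdx
  rcases h with h | ⟨h, h'⟩
  · have h1 := bitVal_lt v
    have h2 : 2 ^ (v.length + 1) ≤ 2 ^ u.length := Nat.pow_le_pow_right (by norm_num) h
    rw [pow_succ] at h2
    omega
  · rw [h]
    omega

/-! ### The indifferent tree and the theorem -/

/-- One position lost for `P_B` suffices for an infinite indifferent tree: the node `u` uses the last
instance and the two last labels of the move of `P_A` at the position numbered `heapIdx u`. -/
theorem hasInfIndiffLitTree_of_lostPos {X Y : Type*} {H : Set (X → Y)} {xs : ℕ → X}
    (P : LostPos H xs) : HasInfIndiffLitTree H := by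
  obtain ⟨φ, hφ⟩ := P.exists_bfs_embedding
  let ψ : List Bool → LostPos H xs := fun u => φ (heapIdx u)
  have hchild : ∀ u b, (ψ (u ++ [b])).V ⊆ ((ψ u).next b).V := by
    intro u b
    have := (hφ _ (heapIdx_ne_zero (u ++ [b]))).1
    rwa [heapIdx_concat_div, heapIdx_concat_bodd] at this
  have hmono : ∀ u s, (ψ (u ++ s)).V ⊆ (ψ u).V := by
    intro u s
    induction s using List.reverseRecOn with
    | nil => simp
    | append_singleton s b ih =>
      rw [← List.append_assoc]
      exact ((hchild _ b).trans (LostPos.next_subset _ b)).trans ih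
  have hne : ∀ u, ∃ h, h ∈ (ψ u).V := fun u =>
    (exists_move_of_lost xs (ψ u).V (ψ u).n (ψ u).lost).1
  choose hC hCV using hne
  have hcons : ∀ u : List Bool, ∀ i < u.length,
      hC u (xs (ψ (u.take i)).move.1) =
        (ψ (u.take i)).move.2 (u.getD i false) (ψ (u.take i)).move.1 := by
    intro u i hi
    apply LostPos.apply_of_mem_next
    apply hchild
    have htake : u.take i ++ [u.getD i false] = u.take (i + 1) := by
      rw [List.take_add_one, List.getD_eq_getElem _ _ hi, List.getElem?_eq_getElem hi]
      rfl
    rw [htake]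
    apply hmono _ (u.drop (i + 1))
    rw [List.take_append_drop]
    exact hCV u
  refine ⟨fun u => xs (ψ u).move.1, fun u b => (ψ u).move.2 b (ψ u).move.1,
    ⟨fun u => (ψ u).legal_move.2.2, fun u => ⟨hC u, (ψ u).subset (hCV u), hcons u⟩⟩,
    hC, fun u => (ψ u).subset (hCV u), hcons, ?_⟩
  rintro v u _ hvu ⟨s, rfl⟩
  exact (ψ u).agree _ (hCV u) _ (hmono u s (hCV _)) _
    ((hφ _ (heapIdx_ne_zero u)).2 _ (heapIdx_lt hvu))

/-- If `H` has no infinite indifferent Littlestone tree, then for every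
instance sequence the player `P_B` has a winning strategy in the Littlestone game. -/
theorem statement5 {X Y : Type*} [Countable Y] (H : Set (X → Y))
    (hH : ¬ HasInfIndiffLitTree H) (xs : ℕ → X) :
    ∃ σ : LitStrategy Y, LitCausal σ ∧ LitWinning H xs σ := by
  by_cases ht : ∃ t : StratTree Y, t.Wins xs H 0
  · obtain ⟨t, ht⟩ := ht
    exact ⟨t.toStrategy, t.litCausal_toStrategy, t.litWinning_toStrategy H xs ht⟩
  · exact absurd (hasInfIndiffLitTree_of_lostPos (xs := xs)
      ⟨H, 0, subset_rfl, fun _ _ _ _ _ hs => absurd hs (Nat.not_lt_zero _), ht⟩) hH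
end
end

section
/- Let 𝒳 be a set, 𝒴 a set, 𝕏 = (X_s)_{s≥1} an instance sequence, d ≥ 1, and ℋ a class of (partial) functions from 𝒳 to 𝒴 all of whose shattered subsequences of 𝕏 have length at most d. For a finite set L ⊆ 𝒳 × 𝒴 write ℋ_L = {h ∈ ℋ : h(x) defined and equal to y for all (x,y) ∈ L}, and for t ≥ 1 define w(ℋ', (X_s)_{s≥t}) = ∑_S 1/n(S)^{d+1}, summing over all finite subsequences S of (X_s)_{s≥t} shattered by ℋ', where n(S) is the index of the last element of S. Then for every t ≥ 1, every finite L ⊆ 𝒳 × 𝒴, and all labels y⁰ ≠ y¹ in 𝒴: w(ℋ_{L∪{(X_t,y⁰)}}, (X_s)_{s>t}) + w(ℋ_{L∪{(X_t,y¹)}}, (X_s)_{s>t}) ≤ w(ℋ_L, (X_s)_{s≥t}). -/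
/-!
The inequality holds because the finite sets counted on the left inject into those counted on the
right without changing their last index. A set `S` of indices `> t` shattered after fixing the label
of `xs t` to be `y0` or `y1` is also shattered from `t` on, with a constant label at time `t`
(`shattered_of_label`). A set `S` shattered for both labels is counted twice on the left; the second
copy is sent to `insert t S`, which is shattered because the bit at `t` chooses between the two
labels of `xs t` and the two witnessing trees (`shattered_insert`). Since `S` is nonempty and lies
above `t`, adjoining `t` does not change its last element.
-/

open Filter MeasureTheory
open scoped ENNReal

attribute [local instance] Classical.propDecidable

noncomputable section


/-- The finite set of indices `S` (a subsequence of `xs` all of whose indices are `≥ a`)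
is shattered by the class `H'` of partial functions (`h x = some y` means `h` is defined
at `x` with value `y`). The bits of a branch `u` are indexed by the elements of `S`
themselves; `z s' u` is the label of instance `xs s'` along branch `u`. -/
def Shattered {X Y : Type*} (H' : Set (X → Option Y)) (xs : ℕ → X) (a : ℕ)
    (S : Finset ℕ) : Prop :=
  S.Nonempty ∧ (∀ s ∈ S, a ≤ s) ∧
  ∃ z : ℕ → (ℕ → Bool) → Y,
    (∀ s' : ℕ, ∀ u u' : ℕ → Bool, (∀ s ∈ S, s ≤ s' → u s = u' s) → z s' u = z s' u') ∧
    (∀ s0 ∈ S, ∀ u u' : ℕ → Bool, (∀ s ∈ S, s < s0 → u s = u' s) → u s0 ≠ u' s0 →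
        z s0 u ≠ z s0 u') ∧
    (∀ u : ℕ → Bool, ∃ h ∈ H', ∀ s' : ℕ, a ≤ s' → s' ≤ S.sup id →
        h (xs s') = some (z s' u))

/-- The subclass of `H` of partial functions agreeing with every labeled example in `L`. -/
def restrictClass {X Y : Type*} (H : Set (X → Option Y)) (L : Set (X × Y)) :
    Set (X → Option Y) :=
  {h ∈ H | ∀ p ∈ L, h p.1 = some p.2}

/-- The weight function `w(H', (xs_s)_{s ≥ a}) = ∑_S 1 / n(S)^{d+1}`, summing over all
finite subsequences `S` shattered by `H'`, where `n(S)` is the index of the last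
element of `S`. -/
def weight {X Y : Type*} (d : ℕ) (H' : Set (X → Option Y)) (xs : ℕ → X) (a : ℕ) : ℝ≥0∞ :=
  ∑' S : {S : Finset ℕ // Shattered H' xs a S},
    ((((S : Finset ℕ).sup id : ℕ) : ℝ≥0∞) ^ (d + 1))⁻¹

/-- The bit-independent label `y` at time `t` extends a tree on times `> t` to times `≥ t`. -/
theorem shattered_of_label {X Y : Type*} {xs : ℕ → X} {H : Set (X → Option Y)}
    {t : ℕ} {L : Set (X × Y)} {y : Y} {S : Finset ℕ}
    (h : Shattered (restrictClass H (insert (xs t, y) L)) xs (t + 1) S) :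
    Shattered (restrictClass H L) xs t S := by
  obtain ⟨hne, hge, z, h1, h2, h3⟩ := h
  refine ⟨hne, fun s hs => (Nat.le_succ t).trans (hge s hs),
    fun s u => if s = t then y else z s u, ?_, ?_, ?_⟩
  · intro s u u' huu
    dsimp only
    rw [h1 s u u' huu]
  · intro s hs u u' huu hne'
    have : s ≠ t := by have := hge s hs; omega
    simpa [this] using h2 s hs u u' huu hne'
  · intro u
    obtain ⟨g, ⟨hgH, hgL⟩, hg⟩ := h3 u
    refine ⟨g, ⟨hgH, fun p hp => hgL p (Set.mem_insert_of_mem _ hp)⟩, fun s hs hs' => ?_⟩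
    by_cases hst : s = t
    · subst hst
      simpa using hgL _ (Set.mem_insert _ _)
    · simpa [hst] using hg s (by omega) hs'

theorem sup_insert_eq {t : ℕ} {S : Finset ℕ} (hne : S.Nonempty) (hge : ∀ s ∈ S, t + 1 ≤ s) :
    (insert t S).sup id = S.sup id := by
  obtain ⟨s, hs⟩ := hne
  rw [Finset.sup_insert]
  refine sup_eq_right.2 (((Nat.le_succ t).trans (hge s hs)).trans ?_)
  exact Finset.le_sup (f := id) hs

/-- Trees for the two labels of `xs t` are glued at a root at time `t`. -/
theorem shattered_insert {X Y : Type*} {xs : ℕ → X} {H : Set (X → Option Y)}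
    {t : ℕ} {L : Set (X × Y)} {y0 y1 : Y} (hy : y0 ≠ y1) {S : Finset ℕ}
    (ha : Shattered (restrictClass H (insert (xs t, y0) L)) xs (t + 1) S)
    (hb : Shattered (restrictClass H (insert (xs t, y1) L)) xs (t + 1) S) :
    Shattered (restrictClass H L) xs t (insert t S) := by
  obtain ⟨hne, hge, z, h1, h2, h3⟩ := ha
  obtain ⟨-, -, w, k1, k2, k3⟩ := hb
  -- Labels at times before `t` are irrelevant, but must not depend on the bit at `t`.
  refine ⟨Finset.insert_nonempty _ _, ?_,
    fun s u => if s < t then y0 else if s = t then (if u t = true then y1 else y0)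
      else (if u t = true then w s u else z s u), ?_, ?_, ?_⟩
  · intro s hs
    rcases Finset.mem_insert.1 hs with rfl | hs
    · exact le_rfl
    · exact (Nat.le_succ t).trans (hge s hs)
  · intro s u u' huu
    dsimp only
    by_cases hst : s < t
    · simp [hst]
    · have e : u t = u' t := huu t (Finset.mem_insert_self _ _) (by omega)
      have e' : ∀ r ∈ S, r ≤ s → u r = u' r := fun r hr => huu r (Finset.mem_insert_of_mem hr)
      rw [e, h1 s u u' e', k1 s u u' e']
  · intro s hs u u' huu hne'
    rcases Finset.mem_insert.1 hs with rfl | hs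
    · cases hu : u s <;> cases hu' : u' s <;> simp_all [Ne.symm hy]
    · have hlt : t < s := hge s hs
      have e : u t = u' t := huu t (Finset.mem_insert_self _ _) hlt
      have e' : ∀ r ∈ S, r < s → u r = u' r := fun r hr => huu r (Finset.mem_insert_of_mem hr)
      have a1 := h2 s hs u u' e' hne'
      have a2 := k2 s hs u u' e' hne'
      have n1 : ¬ s < t := by omega
      have n2 : s ≠ t := by omega
      simp only [n1, n2, if_false, e]
      split_ifs
      · exact a2
      · exact a1
  · intro u
    rw [sup_insert_eq hne hge]
    by_cases hu : u t = true
    · obtain ⟨g, ⟨hgH, hgL⟩, hg⟩ := k3 u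
      refine ⟨g, ⟨hgH, fun p hp => hgL p (Set.mem_insert_of_mem _ hp)⟩, fun s hs hs' => ?_⟩
      by_cases hst : s = t
      · subst hst
        simpa [hu] using hgL _ (Set.mem_insert _ _)
      · simpa [hst, hu, not_lt.2 hs] using hg s (by omega) hs'
    · obtain ⟨g, ⟨hgH, hgL⟩, hg⟩ := h3 u
      refine ⟨g, ⟨hgH, fun p hp => hgL p (Set.mem_insert_of_mem _ hp)⟩, fun s hs hs' => ?_⟩
      by_cases hst : s = t
      · subst hst
        simpa [hu] using hgL _ (Set.mem_insert _ _)
      · simpa [hst, hu, not_lt.2 hs] using hg s (by omega) hs'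

/-- The key weight inequality: restricting by the two possible labels
`y0 ≠ y1` of `xs t` splits the weight. -/
theorem statement8 {X Y : Type*} (xs : ℕ → X) (d : ℕ) (hd : 1 ≤ d)
    (H : Set (X → Option Y))
    (hshat : ∀ S : Finset ℕ, Shattered H xs 1 S → S.card ≤ d)
    (t : ℕ) (ht : 1 ≤ t) (L : Finset (X × Y)) (y0 y1 : Y) (hy : y0 ≠ y1) :
    weight d (restrictClass H (insert (xs t, y0) ↑L)) xs (t + 1) +
        weight d (restrictClass H (insert (xs t, y1) ↑L)) xs (t + 1) ≤
      weight d (restrictClass H ↑L) xs t := by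
  set A : Finset ℕ → Prop := Shattered (restrictClass H (insert (xs t, y0) ↑L)) xs (t + 1) with hA
  set B : Finset ℕ → Prop := Shattered (restrictClass H (insert (xs t, y1) ↑L)) xs (t + 1) with hB
  set C : Finset ℕ → Prop := Shattered (restrictClass H ↑L) xs t with hC
  have notMem : ∀ {S : Finset ℕ}, (∀ s ∈ S, t + 1 ≤ s) → t ∉ S := fun hS ht' => by
    have := hS t ht'
    omega
  let e : {S // A S} ⊕ {S // B S} → {S // C S} := Sum.elim
    (fun S => ⟨S.1, shattered_of_label S.2⟩)
    (fun S => if h : A S.1 then ⟨insert t S.1, shattered_insert hy h S.2⟩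
      else ⟨S.1, shattered_of_label S.2⟩)
  let f : Finset ℕ → ℝ≥0∞ := fun S => (((S.sup id : ℕ) : ℝ≥0∞) ^ (d + 1))⁻¹
  have einl : ∀ S : {S // A S}, (e (Sum.inl S)).1 = S.1 := fun S => rfl
  have einr : ∀ S : {S // B S}, (e (Sum.inr S)).1 = if A S.1 then insert t S.1 else S.1 := by
    intro S
    by_cases h : A S.1 <;> simp [e, h]
  have he : Function.Injective e := by
    rintro (S | S) (T | T) hST
    · have := congrArg Subtype.val hST
      rw [einl, einl] at this
      exact congrArg Sum.inl (Subtype.ext this)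
    · have := congrArg Subtype.val hST
      rw [einl, einr] at this
      split_ifs at this with h
      · exact absurd (this ▸ Finset.mem_insert_self t T.1) (notMem S.2.2.1)
      · exact absurd (this ▸ S.2) h
    · have := congrArg Subtype.val hST
      rw [einl, einr] at this
      split_ifs at this with h
      · exact absurd (this ▸ Finset.mem_insert_self t S.1) (notMem T.2.2.1)
      · exact absurd (this ▸ T.2) h
    · have := congrArg Subtype.val hST
      rw [einr, einr] at this
      have hS := notMem S.2.2.1
      have hT := notMem T.2.2.1
      refine congrArg Sum.inr (Subtype.ext ?_)
      -- Erasing `t` recovers the preimage in either case.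
      have := congrArg (fun U => Finset.erase U t) this
      split_ifs at this <;> simpa [hS, hT] using this
  have fe : ∀ x, f (e x).1 = Sum.elim (fun S => f S.1) (fun S => f S.1) x := by
    rintro (S | S)
    · rfl
    · rw [einr]
      split_ifs
      · simp only [f, Sum.elim_inr, sup_insert_eq S.2.1 S.2.2.1]
      · rfl
  calc _ = (∑' S : {S // A S}, f S.1) + ∑' S : {S // B S}, f S.1 := rfl
    _ = ∑' x, f (e x).1 := by
      rw [Summable.tsum_sum ENNReal.summable ENNReal.summable]
      simp only [fe, Sum.elim_inl, Sum.elim_inr]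
    _ ≤ ∑' S : {S // C S}, f S.1 :=
      ENNReal.tsum_comp_le_tsum_of_injective he (fun S : {S // C S} => f S.1)
    _ = _ := rfl
end
end

section
/- Let 𝒳 be a set, 𝒴 a set, 𝕏 = (X_s)_{s≥1} an instance sequence, d ≥ 1, and ℋ' a class of (partial) functions from 𝒳 to 𝒴 such that every subsequence of 𝕏 shattered by ℋ' has length at most d. Then (i) for every n ≥ 1, the number of subsequences of 𝕏 shattered by ℋ' whose last element is X_n is at most n^{d−1}; and (ii) consequently w(ℋ', 𝕏) = ∑_S 1/n(S)^{d+1} ≤ ∑_{n=1}^∞ 1/n² = π²/6, where the sum is over all finite subsequences S of 𝕏 shattered by ℋ' and n(S) is the index of the last element of S. -/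
/-!
Shattering is used only through the size bound and the condition that all indices are at least
`1`. A shattered `S` with last element `n` is `{n} ∪ T` with `T ⊆ {1, …, n - 1}` and
`|T| ≤ d - 1`. Listing `T` and padding with zeros shows that `T` is the set of nonzero values of
some function `Fin (d - 1) → {0, …, n - 1}`, and there are `n ^ (d - 1)` such functions.
For the weight, grouping the sum by the last element `n` bounds the `n`-th group by
`n ^ (d - 1) / n ^ (d + 1) = 1 / n ^ 2`, and these sum to `π ^ 2 / 6`.
-/

open Filter MeasureTheory
open scoped ENNReal

attribute [local instance] Classical.propDecidable

noncomputable section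


/-- Padding a listing of `T` by zeros: a set of at most `k` positive naturals below `n` is the set
of nonzero values of a function `Fin k → {0, …, n - 1}`. -/
lemma exists_padded_listing (T : Finset ℕ) (k n : ℕ) (hn : 1 ≤ n) (hk : T.card ≤ k)
    (hpos : ∀ t ∈ T, 1 ≤ t) (hlt : ∀ t ∈ T, t < n) :
    ∃ f : Fin k → ℕ, (∀ i, f i < n) ∧ (Finset.univ.image f).erase 0 = T := by
  refine ⟨fun i => T.toList.getD i 0, fun i => ?_, ?_⟩
  · beta_reduce
    by_cases h : (i : ℕ) < T.toList.length
    · rw [List.getD_eq_getElem _ _ h]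
      exact hlt _ (Finset.mem_toList.1 (List.getElem_mem h))
    · rw [List.getD_eq_default _ _ (not_lt.1 h)]
      exact hn
  · ext t
    simp only [Finset.mem_erase, Finset.mem_image, Finset.mem_univ, true_and]
    constructor
    · rintro ⟨h0, i, rfl⟩
      by_cases h : (i : ℕ) < T.toList.length
      · rw [List.getD_eq_getElem _ _ h]
        exact Finset.mem_toList.1 (List.getElem_mem h)
      · exact absurd (List.getD_eq_default _ _ (not_lt.1 h)) h0
    · intro ht
      refine ⟨Nat.one_le_iff_ne_zero.1 (hpos t ht), ?_⟩
      obtain ⟨i, hi, rfl⟩ := List.getElem_of_mem (Finset.mem_toList.2 ht)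
      have hi' : i < T.card := by simpa using hi
      exact ⟨⟨i, hi'.trans_le hk⟩, List.getD_eq_getElem _ _ hi⟩

/-- A finite set of naturals whose supremum is `n ≥ 1` contains `n` (this excludes the empty set,
whose supremum is `0`). -/
lemma mem_of_sup_id_eq {S : Finset ℕ} {n : ℕ} (hn : 1 ≤ n) (h : S.sup id = n) : n ∈ S := by
  have hS : S.Nonempty := by
    rw [Finset.nonempty_iff_ne_empty]
    rintro rfl
    simp at h
    omega
  obtain ⟨s, hs, he⟩ := Finset.exists_mem_eq_sup S hS id
  rw [← h, he]
  exact hs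

/-- The sets of at most `d` positive naturals with maximum `n` all lie in an explicit finite family
of size at most `n ^ (d - 1)`. -/
lemma exists_cover (d n : ℕ) (hn : 1 ≤ n) :
    ∃ F : Finset (Finset ℕ), F.card ≤ n ^ (d - 1) ∧
      ∀ S : Finset ℕ, (∀ s ∈ S, 1 ≤ s) → S.card ≤ d → S.sup id = n → S ∈ F := by
  refine ⟨(Fintype.piFinset fun _ : Fin (d - 1) => Finset.range n).image
    fun f => insert n ((Finset.univ.image f).erase 0), ?_, ?_⟩
  · refine Finset.card_image_le.trans ?_
    simp
  · intro S hpos hcard hsup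
    have hmem := mem_of_sup_id_eq hn hsup
    obtain ⟨f, hf, hT⟩ := exists_padded_listing (S.erase n) (d - 1) n hn
      (by rw [Finset.card_erase_of_mem hmem]; omega)
      (fun t ht => hpos t (Finset.mem_of_mem_erase ht))
      (fun t ht => lt_of_le_of_ne
        (hsup ▸ Finset.le_sup (f := id) (Finset.mem_of_mem_erase ht))
        (Finset.ne_of_mem_erase ht))
    refine Finset.mem_image.2 ⟨f, ?_, ?_⟩
    · simpa using hf
    · rw [hT, Finset.insert_erase hmem]

/-- (i) For every `n ≥ 1` there are at most `n^(d-1)` shattered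
subsequences of `xs` ending at index `n`; (ii) consequently the total weight is at most
`∑ 1/n² = π²/6`. -/
theorem statement9 {X Y : Type*} (xs : ℕ → X) (d : ℕ) (hd : 1 ≤ d)
    (H' : Set (X → Option Y))
    (hshat : ∀ S : Finset ℕ, Shattered H' xs 1 S → S.card ≤ d) :
    (∀ n : ℕ, 1 ≤ n →
      {S : Finset ℕ | Shattered H' xs 1 S ∧ S.sup id = n}.Finite ∧
      Nat.card {S : Finset ℕ // Shattered H' xs 1 S ∧ S.sup id = n} ≤ n ^ (d - 1)) ∧
    weight d H' xs 1 ≤ ENNReal.ofReal (Real.pi ^ 2 / 6) := by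
  have hfin : ∀ n : ℕ, 1 ≤ n →
      {S : Finset ℕ | Shattered H' xs 1 S ∧ S.sup id = n}.Finite ∧
      Nat.card {S : Finset ℕ // Shattered H' xs 1 S ∧ S.sup id = n} ≤ n ^ (d - 1) := by
    intro n hn
    obtain ⟨F, hF, hmem⟩ := exists_cover d n hn
    have hsub : {S : Finset ℕ | Shattered H' xs 1 S ∧ S.sup id = n} ⊆ (F : Set (Finset ℕ)) :=
      fun S hS => hmem S hS.1.2.1 (hshat S hS.1) hS.2
    refine ⟨F.finite_toSet.subset hsub, ?_⟩
    refine le_trans (Nat.card_mono F.finite_toSet hsub) ?_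
    simpa using hF
  refine ⟨hfin, ?_⟩
  let last : {S : Finset ℕ // Shattered H' xs 1 S} → ℕ := fun S => (S : Finset ℕ).sup id
  have hz : HasSum (fun n : ℕ => 1 / (n : ℝ) ^ 2) (Real.pi ^ 2 / 6) := hasSum_zeta_two
  rw [← hz.tsum_eq, ENNReal.ofReal_tsum_of_nonneg (fun n => by positivity) hz.summable]
  unfold weight
  rw [← (Equiv.sigmaFiberEquiv last).tsum_eq, ENNReal.tsum_sigma']
  refine ENNReal.tsum_le_tsum fun n => ?_
  have hconst : ∀ S : {S // last S = n},
      (((((Equiv.sigmaFiberEquiv last ⟨n, S⟩ : {S // Shattered H' xs 1 S}) :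
        Finset ℕ).sup id : ℕ) : ℝ≥0∞) ^ (d + 1))⁻¹ = ((n : ℝ≥0∞) ^ (d + 1))⁻¹ := by
    rintro ⟨S, rfl⟩
    rfl
  rw [tsum_congr hconst, ENNReal.tsum_const]
  rcases Nat.eq_zero_or_pos n with rfl | hn
  · have : IsEmpty {S // last S = 0} := by
      refine ⟨fun ⟨S, hS⟩ => ?_⟩
      obtain ⟨s, hs⟩ := S.2.1
      have h1 := S.2.2.1 s hs
      have h2 : s ≤ last S := Finset.le_sup (f := id) hs
      omega
    -- The fibre over `0` is empty, so its cardinality cancels the factor `0⁻¹ = ∞`.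
    rw [(ENat.card_eq_zero_iff_empty _).2 this]
    simp
  · obtain ⟨hf, hc⟩ := hfin n hn
    have e : {S // last S = n} ≃ {S : Finset ℕ // Shattered H' xs 1 S ∧ S.sup id = n} :=
      Equiv.subtypeSubtypeEquivSubtypeInter (Shattered H' xs 1) (fun S => S.sup id = n)
    have : Finite {S : Finset ℕ // Shattered H' xs 1 S ∧ S.sup id = n} := hf
    have hcard : ((ENat.card {S // last S = n} : ℕ∞) : ℝ≥0∞) ≤ (n : ℝ≥0∞) ^ (d - 1) := by
      rw [ENat.card_congr e, ENat.card_eq_coe_natCard]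
      exact_mod_cast hc
    have hn0 : (n : ℝ≥0∞) ≠ 0 := by exact_mod_cast hn.ne'
    have hnpos : (0 : ℝ) < n := by exact_mod_cast hn
    calc _ ≤ (n : ℝ≥0∞) ^ (d - 1) * ((n : ℝ≥0∞) ^ (d + 1))⁻¹ := by gcongr
      _ = ((n : ℝ≥0∞) ^ 2)⁻¹ := by
        rw [show d + 1 = (d - 1) + 2 by omega, pow_add,
          ENNReal.mul_inv (Or.inl (pow_ne_zero _ hn0)) (Or.inl (by finiteness)), ← mul_assoc,
          ENNReal.mul_inv_cancel (pow_ne_zero _ hn0) (by finiteness), one_mul]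
      _ = ENNReal.ofReal (1 / (n : ℝ) ^ 2) := by
        rw [one_div, ENNReal.ofReal_inv_of_pos (by positivity),
          ENNReal.ofReal_pow hnpos.le, ENNReal.ofReal_natCast]
      _ ≤ _ := le_rfl
end
end

section
/- Let 𝒳 and 𝒴 be countable sets, ℋ a class of (partial) functions from 𝒳 to 𝒴, L ⊆ 𝒳 × 𝒴 a finite set, x ∈ 𝒳, and for a finite instance sequence Z let w(ℋ', Z) denote the number of finite subsequences of Z shattered by ℋ'; write ℋ_L = {h ∈ ℋ : h(x') defined and equal to y' for all (x',y') ∈ L}. Let Z be a random finite sequence in 𝒳 (on any probability space) whose first coordinate equals x almost surely. Then there is at most one label y ∈ 𝒴 such that P[ w(ℋ_{L∪{(x,y)}}, Z) ≤ (1/2)·w(ℋ_L, Z) ] < 1/2. -/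
/-!
For a sequence starting with `x` and labels `y ≠ y'`, write `w_y`, `w_y'`, `w` for the numbers of
subsequences shattered by the classes restricted by `(x, y)`, by `(x, y')`, and by neither.
The key fact (`listShatCount_add_le`) is `w_y + w_y' ≤ w`. A subsequence shattered by either
restricted class avoids the index `0`, since every function of that class takes one and the same
value at `x` (`Shattered.zero_notMem`), and it is shattered by the larger class
(`Shattered.mono`). If it is shattered by both, then adding the index `0` gives another subsequence
shattered by the larger class, the new first bit choosing between `y` and `y'`
(`Shattered.insert_zero`). With `A` and `B` the sets of subsequences shattered by the two restricted
classes, inclusion–exclusion gives `w_y + w_y' = |A ∪ B| + |A ∩ B| ≤ w`.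

It follows that almost surely `2 w_y ≤ w` or `2 w_y' ≤ w`, so the two events have (outer)
probabilities summing to at least `1` and cannot both be below `1 / 2`. Only finite
subadditivity is needed, which holds without measurability of the events.
-/

open Filter MeasureTheory
open scoped ENNReal

attribute [local instance] Classical.propDecidable

noncomputable section


/-- `w(H', l)`: the number of finite subsequences of the finite sequence `l` shattered
by `H'` (the default `x0` is irrelevant: only positions `< l.length` are used). -/
def listShatCount {X Y : Type*} (H' : Set (X → Option Y)) (x0 : X) (l : List X) : ℕ :=
  Nat.card {S : Finset ℕ //
    Shattered H' (fun s => l.getD s x0) 0 S ∧ ∀ s ∈ S, s < l.length}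

lemma Shattered.mono {X Y : Type*} {H₁ H₂ : Set (X → Option Y)} (h : H₁ ⊆ H₂) {xs : ℕ → X}
    {a : ℕ} {S : Finset ℕ} (hS : Shattered H₁ xs a S) : Shattered H₂ xs a S := by
  obtain ⟨hne, ha, z, h1, h2, h3⟩ := hS
  refine ⟨hne, ha, z, h1, h2, fun u => ?_⟩
  obtain ⟨g, hg, hz⟩ := h3 u
  exact ⟨g, h hg, hz⟩

/-- A class whose functions all take the value `y` at the first instance cannot branch there. -/
lemma Shattered.zero_notMem {X Y : Type*} {H' : Set (X → Option Y)} {xs : ℕ → X} {y : Y}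
    (hy : ∀ h ∈ H', h (xs 0) = some y) {S : Finset ℕ} (hS : Shattered H' xs 0 S) : 0 ∉ S := by
  intro h0
  obtain ⟨-, -, z, -, h2, h3⟩ := hS
  have key : ∀ u, z 0 u = y := fun u => by
    obtain ⟨g, hg, hz⟩ := h3 u
    have := hz 0 le_rfl (Nat.zero_le _)
    rw [hy g hg] at this
    exact (Option.some.inj this).symm
  exact h2 0 h0 (fun _ => true) (fun _ => false) (fun s _ hs => absurd hs (Nat.not_lt_zero s))
    (by simp) ((key _).trans (key _).symm)

/-- Two shattering trees of the same index set, whose root labels differ, are glued together by a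
new branching at index `0`. -/
lemma Shattered.insert_zero {X Y : Type*} {H₁ H₂ H' : Set (X → Option Y)} {xs : ℕ → X} {y y' : Y}
    (hyy : y ≠ y') (hy : ∀ h ∈ H₁, h (xs 0) = some y) (hy' : ∀ h ∈ H₂, h (xs 0) = some y')
    (hs₁ : H₁ ⊆ H') (hs₂ : H₂ ⊆ H') {S : Finset ℕ}
    (hS₁ : Shattered H₁ xs 0 S) (hS₂ : Shattered H₂ xs 0 S) :
    Shattered H' xs 0 (insert 0 S) := by
  obtain ⟨-, -, z, h1, h2, h3⟩ := hS₁
  obtain ⟨-, -, w, k1, k2, k3⟩ := hS₂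
  have hz0 : ∀ u, z 0 u = y := fun u => by
    obtain ⟨g, hg, hz⟩ := h3 u
    have := hz 0 le_rfl (Nat.zero_le _)
    rw [hy g hg] at this
    exact (Option.some.inj this).symm
  have hw0 : ∀ u, w 0 u = y' := fun u => by
    obtain ⟨g, hg, hz⟩ := k3 u
    have := hz 0 le_rfl (Nat.zero_le _)
    rw [hy' g hg] at this
    exact (Option.some.inj this).symm
  refine ⟨Finset.insert_nonempty _ _, fun _ _ => Nat.zero_le _,
    fun s u => bif u 0 then z s u else w s u, ?_, ?_, ?_⟩
  · intro s' u u' h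
    have h0 := h 0 (Finset.mem_insert_self _ _) (Nat.zero_le _)
    have hz := h1 s' u u' fun s hs => h s (Finset.mem_insert_of_mem hs)
    have hw := k1 s' u u' fun s hs => h s (Finset.mem_insert_of_mem hs)
    simp only [h0, hz, hw]
  · intro s0 hs0 u u' h hne
    rcases Nat.eq_zero_or_pos s0 with rfl | hpos
    · simp only [hz0, hw0]
      cases hu : u 0 <;> cases hu' : u' 0 <;> simp_all [Ne.symm]
    · have hmem : s0 ∈ S := (Finset.mem_insert.1 hs0).resolve_left hpos.ne'
      have h0 := h 0 (Finset.mem_insert_self _ _) hpos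
      have hz := h2 s0 hmem u u' (fun s hs => h s (Finset.mem_insert_of_mem hs)) hne
      have hw := k2 s0 hmem u u' (fun s hs => h s (Finset.mem_insert_of_mem hs)) hne
      simp only [h0]
      cases u' 0
      · exact hw
      · exact hz
  · intro u
    have hsup : (insert 0 S).sup id = S.sup id := by simp
    rw [hsup]
    cases hu : u 0
    · obtain ⟨g, hg, hz⟩ := k3 u
      exact ⟨g, hs₂ hg, by simpa [hu] using hz⟩
    · obtain ⟨g, hg, hz⟩ := h3 u
      exact ⟨g, hs₁ hg, by simpa [hu] using hz⟩

/-- Restricting by two different labels of the first instance splits the shattered-subsequence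
count. -/
lemma listShatCount_add_le {X Y : Type*} (H : Set (X → Option Y)) (L : Set (X × Y)) (x : X)
    {y y' : Y} (hyy : y ≠ y') {l : List X} (hl : l.head? = some x) :
    listShatCount (restrictClass H (insert (x, y) L)) x l +
      listShatCount (restrictClass H (insert (x, y') L)) x l ≤
    listShatCount (restrictClass H L) x l := by
  have hx0 : l.getD 0 x = x := by cases l <;> simp_all
  have hlen : 0 < l.length := by cases l <;> simp_all
  have hval : ∀ v, ∀ h ∈ restrictClass H (insert (x, v) L),
      h ((fun s => l.getD s x) 0) = some v := by
    intro v h hh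
    simp only [hx0]
    exact hh.2 (x, v) (Set.mem_insert _ _)
  have hsub : ∀ v, restrictClass H (insert (x, v) L) ⊆ restrictClass H L :=
    fun v h hh => ⟨hh.1, fun p hp => hh.2 p (Set.mem_insert_of_mem _ hp)⟩
  let W : Set (X → Option Y) → Set (Finset ℕ) := fun H' =>
    {S | Shattered H' (fun s => l.getD s x) 0 S ∧ ∀ s ∈ S, s < l.length}
  have hfin : ∀ H', (W H').Finite := fun H' =>
    (Finset.finite_toSet (Finset.range l.length).powerset).subset fun S hS => by
      simp only [Finset.coe_powerset, Set.mem_preimage, Set.mem_powerset_iff, Finset.coe_subset]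
      exact fun s hs => Finset.mem_range.2 (hS.2 s hs)
  set A := W (restrictClass H (insert (x, y) L)) with hA
  set B := W (restrictClass H (insert (x, y') L)) with hB
  set C := W (restrictClass H L) with hC
  change A.ncard + B.ncard ≤ C.ncard
  have hA0 : ∀ S ∈ A, 0 ∉ S := fun S hS => hS.1.zero_notMem (hval y)
  have hB0 : ∀ S ∈ B, 0 ∉ S := fun S hS => hS.1.zero_notMem (hval y')
  have hAf : A.Finite := hfin _
  have hBf : B.Finite := hfin _
  have hinj : Set.InjOn (fun S : Finset ℕ => insert 0 S) (A ∩ B) := by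
    intro S hS T hT hST
    have := congrArg (fun U => Finset.erase U 0) hST
    simpa [Finset.erase_insert (hA0 S hS.1), Finset.erase_insert (hA0 T hT.1)] using this
  have hdisj : Disjoint (A ∪ B) ((fun S : Finset ℕ => insert 0 S) '' (A ∩ B)) := by
    rw [Set.disjoint_left]
    rintro _ hU ⟨S, -, rfl⟩
    have h0 : 0 ∈ insert 0 S := Finset.mem_insert_self 0 S
    exact hU.elim (fun h => hA0 _ h h0) (fun h => hB0 _ h h0)
  calc A.ncard + B.ncard = (A ∪ B).ncard + (A ∩ B).ncard :=
        (Set.ncard_union_add_ncard_inter A B hAf hBf).symm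
    _ = (A ∪ B).ncard + ((fun S : Finset ℕ => insert 0 S) '' (A ∩ B)).ncard := by
        rw [hinj.ncard_image]
    _ = ((A ∪ B) ∪ ((fun S : Finset ℕ => insert 0 S) '' (A ∩ B))).ncard :=
        (Set.ncard_union_eq hdisj (hAf.union hBf)
          ((hAf.subset Set.inter_subset_left).image _)).symm
    _ ≤ C.ncard := by
        refine Set.ncard_le_ncard ?_ (hfin _)
        rintro U ((hU | hU) | ⟨S, ⟨hSA, hSB⟩, rfl⟩)
        · exact ⟨hU.1.mono (hsub y), hU.2⟩
        · exact ⟨hU.1.mono (hsub y'), hU.2⟩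
        · refine ⟨Shattered.insert_zero hyy (hval y) (hval y') (hsub y) (hsub y') hSA.1 hSB.1,
            fun s hs => ?_⟩
          rcases Finset.mem_insert.1 hs with rfl | hs
          · exact hlen
          · exact hSA.2 s hs

/-- For a random finite sequence `Z` starting at `x` (a.s.), there is
at most one label `y` such that, with probability `< 1/2`, adding the example `(x, y)`
halves the shattered-subsequence count. -/
theorem statement10 {X Y : Type*} [Countable X] [Countable Y]
    (H : Set (X → Option Y)) (L : Finset (X × Y)) (x : X)
    {Ω : Type*} [MeasurableSpace Ω] (μ : Measure Ω) [IsProbabilityMeasure μ]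
    (Z : Ω → List X) (hZ : ∀ᵐ ω ∂μ, (Z ω).head? = some x) :
    {y : Y | μ {ω | 2 * listShatCount (restrictClass H (insert (x, y) ↑L)) x (Z ω) ≤
        listShatCount (restrictClass H ↑L) x (Z ω)} < 1 / 2}.Subsingleton := by
  intro y hy y' hy'
  by_contra hne
  simp only [Set.mem_ofPred_eq] at hy hy'
  set E : Y → Set Ω := fun v =>
    {ω | 2 * listShatCount (restrictClass H (insert (x, v) ↑L)) x (Z ω) ≤
      listShatCount (restrictClass H ↑L) x (Z ω)} with hE
  have hcover : ∀ᵐ ω ∂μ, ω ∈ Set.univ → ω ∈ E y ∪ E y' := by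
    filter_upwards [hZ] with ω hω _
    have := listShatCount_add_le H (↑L) x hne hω
    simp only [hE, Set.mem_union, Set.mem_ofPred_eq]
    omega
  have h1 : (1 : ℝ≥0∞) ≤ μ (E y) + μ (E y') :=
    calc (1 : ℝ≥0∞) = μ Set.univ := measure_univ.symm
      _ ≤ μ (E y ∪ E y') := measure_mono_ae hcover
      _ ≤ μ (E y) + μ (E y') := measure_union_le _ _
  have h2 : μ (E y) + μ (E y') < 1 / 2 + 1 / 2 := ENNReal.add_lt_add hy hy'
  rw [ENNReal.add_halves] at h2
  exact absurd h1 (not_le.2 h2)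
end
end

section
/- There exist a countably infinite instance space 𝒳, the label space 𝒴 = ℕ ∪ {0}, and a concept class ℋ ⊆ 𝒴^𝒳 such that (i) ℋ has an infinite LCL-Littlestone (LCLL) tree, and yet (ii) for every instance sequence 𝕏 = (X_t)_{t≥1} there exists a deterministic transductive online learning algorithm making only finitely many mistakes on every label sequence 𝕐 with (𝕏,𝕐) realizable by ℋ. Concretely, one may take a collection of pairwise distinct instances x_u ∈ 𝒳^{k+1} indexed by u ∈ {0,1}^1 × ⋯ × {0,1}^k (k ≥ 0), and ℋ = { h_u : u ∈ ⋃_{k≥1} {0,1}^1 × ⋯ × {0,1}^k }, where h_u(x_{u_{≤ j−1}}^i) = u_j^i for all 1 ≤ j ≤ |u| and 1 ≤ i ≤ j, and h_u(x) = |u| + 1 for all other x ∈ 𝒳 (|u| being the number of tuples in u). -/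
/-!
For a fixed instance sequence, a learner with finitely many mistakes exists as soon as the set of
realizable label sequences is countable: enumerate them and predict with the first one that is
still consistent. Each mistake raises the index used, and this index never passes that of the true
sequence (`exists_learner`).

The class is the tree class: a concept follows a finite path of the tree, reveals its bits on the
nodes it visits, and reveals the length of the path (as a label `≥ 2`) everywhere else. For this
class every instance sequence has only countably many realizable label sequences
(`countable_realizable`). The class is itself countable, so it suffices to consider realizable
sequences `ys` that are not of the form `h ∘ xs` with `h` in the class.

* A label `≥ 2` pins down the length of the path, hence leaves finitely many concepts, and by
  pigeonhole one of them produces all of `ys`. So all labels are `≤ 1`.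
* If the instances take finitely many values, one concept already produces all of `ys`. So they
  take infinitely many values, and since all visited nodes of bounded depth form a finite set, the
  instances reach unbounded depth.
* A label `≤ 1` at a deep node tells that this node is on the path, so the name of the node gives
  the labels of all shallower instances. Hence at most one such `ys` remains.
-/

open Filter MeasureTheory
open scoped ENNReal

attribute [local instance] Classical.propDecidable

noncomputable section


/-- A deterministic transductive online learning algorithm: it sees the whole instance
sequence in advance and, at each round, the list of previously revealed true labels. -/
abbrev DetPred (X Y : Type*) := (ℕ → X) → List Y → Y

/-- Number of mistakes of `A` on `(xs, ys)` during the first `T` rounds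
(rounds are indexed by `t = 0, 1, 2, …`). -/
def detMistakes {X Y : Type*} (A : DetPred X Y) (xs : ℕ → X) (ys : ℕ → Y) (T : ℕ) : ℕ :=
  ∑ t ∈ Finset.range T, if A xs ((List.range t).map ys) = ys t then 0 else 1

/-! ### Learning from countably many label sequences -/

/-- Predicting with the first consistent sequence of a fixed enumeration makes finitely many
mistakes. -/
lemma exists_learner {X : Type*} (xs : ℕ → X) (R : Set (ℕ → ℕ)) (hR : R.Countable) :
    ∃ A : DetPred X ℕ, ∀ ys ∈ R, ∃ C : ℕ, ∀ T : ℕ, detMistakes A xs ys T ≤ C := by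
  rcases R.eq_empty_or_nonempty with rfl | hne
  · exact ⟨fun _ _ => 0, fun ys h => absurd h (Set.notMem_empty _)⟩
  obtain ⟨f, rfl⟩ := hR.exists_eq_range hne
  refine ⟨fun _ l => if h : ∃ n, (List.range l.length).map (f n) = l
    then f (Nat.find h) l.length else 0, ?_⟩
  rintro _ ⟨N, rfl⟩
  have hex : ∀ t, ∃ n, ∀ i < t, f n i = f N i := fun t => ⟨N, fun _ _ => rfl⟩
  have hpred : ∀ t, (if h : ∃ n, (List.range ((List.range t).map (f N)).length).map (f n) =
      (List.range t).map (f N) then f (Nat.find h) ((List.range t).map (f N)).length else 0)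
      = f (Nat.find (hex t)) t := by
    intro t
    have h : ∃ n, (List.range ((List.range t).map (f N)).length).map (f n) =
      (List.range t).map (f N) := ⟨N, by simp⟩
    rw [dif_pos h]
    have : Nat.find h = Nat.find (hex t) := by
      apply le_antisymm
      · apply Nat.find_min'
        simpa using Nat.find_spec (hex t)
      · apply Nat.find_min'
        simpa using Nat.find_spec h
    rw [this]; simp
  -- The number of mistakes so far is at most the index of the first consistent sequence.
  have key : ∀ T, detMistakes (fun _ l => if h : ∃ n, (List.range l.length).map (f n) = l
    then f (Nat.find h) l.length else 0) xs (f N) T ≤ Nat.find (hex T) := by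
    intro T
    induction T with
    | zero => simp [detMistakes]
    | succ T ih =>
      unfold detMistakes at ih ⊢
      rw [Finset.sum_range_succ]
      simp only [hpred] at ih ⊢
      have hs := Nat.find_spec (hex (T + 1))
      have hle : Nat.find (hex T) ≤ Nat.find (hex (T + 1)) :=
        Nat.find_min' _ fun i hi => hs i (by omega)
      split_ifs with hc
      · omega
      · have : Nat.find (hex T) ≠ Nat.find (hex (T + 1)) := by
          intro he
          apply hc
          rw [he]
          exact hs T (by omega)
        omega
  exact ⟨N, fun T => (key T).trans (Nat.find_min' _ fun _ _ => rfl)⟩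

/-! ### The tree class -/

/-- The concept of the path of length `n` whose bits equal to one are at the (level, position)
pairs in `S`. An instance is a triple `(k, P, i)`: the `i`-th entry at the depth-`k` node whose
path has ones exactly at `P`. Triples with `k < i`, or with `P` not a set of pairs `(m, j)`,
`j ≤ m < k`, are not in the tree; they receive the label `n + 2` whenever all pairs in `S` satisfy
`j ≤ m`. -/
def pathConcept (n : ℕ) (S : Finset (ℕ × ℕ)) : ℕ × Finset (ℕ × ℕ) × ℕ → ℕ := fun a =>
  if a.1 < n ∧ a.2.2 ≤ a.1 ∧ a.2.1 = S.filter (fun p => p.1 < a.1) then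
    if (a.1, a.2.2) ∈ S then 1 else 0
  else n + 2

/-- The positions `(m, j)` with `j ≤ m < n` of the bits of a path of length `n`. -/
def positions (n : ℕ) : Finset (ℕ × ℕ) :=
  (Finset.range n ×ˢ Finset.range n).filter (fun p => p.2 ≤ p.1)

/-- All concepts of finite paths. -/
def pathClass : Set (ℕ × Finset (ℕ × ℕ) × ℕ → ℕ) :=
  {h | ∃ n S, S ⊆ positions n ∧ h = pathConcept n S}

/-- The ones of the first `k` tuples of `u`. -/
def ones (k : ℕ) (u : ℕ → ℕ → Bool) : Finset (ℕ × ℕ) :=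
  (positions k).filter (fun p => u p.1 p.2 = true)

lemma mem_positions {n : ℕ} {p : ℕ × ℕ} : p ∈ positions n ↔ p.1 < n ∧ p.2 ≤ p.1 := by
  simp only [positions, Finset.mem_filter, Finset.mem_product, Finset.mem_range]
  omega

lemma mem_ones {k : ℕ} {u : ℕ → ℕ → Bool} {p : ℕ × ℕ} :
    p ∈ ones k u ↔ (p.1 < k ∧ p.2 ≤ p.1) ∧ u p.1 p.2 = true := by
  simp [ones, mem_positions]

lemma hasInfLCLLTree_pathClass : HasInfLCLLTree pathClass := by
  refine ⟨fun k u i => (k, ones k u, i), fun k u i => if u k i = true then 1 else 0,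
    ?_, ?_, ?_, ?_⟩
  · intro k u u' h i _
    have : ones k u = ones k u' := by
      ext p
      rw [mem_ones, mem_ones]
      refine and_congr_right fun hp => ?_
      rw [h p.1 hp.1 p.2 hp.2]
    simp only [this]
  · intro k i _ u u' _ h
    simp only [h i le_rfl]
  · intro k i _ u u' _ _ hne
    cases h1 : u k i <;> cases h2 : u' k i <;> simp_all
  · intro u n
    refine ⟨_, ⟨n + 1, ones (n + 1) u, Finset.filter_subset _ _, rfl⟩, ?_⟩
    intro k hk i hi
    have h1 : ones k u = (ones (n + 1) u).filter (fun p => p.1 < k) := by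
      ext p
      simp only [Finset.mem_filter, mem_ones]
      constructor
      · rintro ⟨⟨h1, h2⟩, h3⟩
        exact ⟨⟨⟨by omega, h2⟩, h3⟩, h1⟩
      · rintro ⟨⟨⟨_, h2⟩, h3⟩, h1⟩
        exact ⟨⟨h1, h2⟩, h3⟩
    have h2 : (k, i) ∈ ones (n + 1) u ↔ u k i = true := by
      rw [mem_ones]
      exact ⟨fun h => h.2, fun h => ⟨⟨by simp only; omega, hi⟩, h⟩⟩
    simp only [pathConcept]
    rw [if_pos ⟨by omega, hi, h1⟩]
    simp only [h2]

lemma countable_pathClass : pathClass.Countable := by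
  refine (Set.countable_range fun q : ℕ × Finset (ℕ × ℕ) => pathConcept q.1 q.2).mono ?_
  rintro _ ⟨n, S, _, rfl⟩
  exact ⟨(n, S), rfl⟩

/-- A label `≤ 1` certifies that the node of the instance is on the path. -/
lemma on_path {n : ℕ} {S : Finset (ℕ × ℕ)} {a : ℕ × Finset (ℕ × ℕ) × ℕ}
    (h : pathConcept n S a ≤ 1) :
    a.1 < n ∧ a.2.2 ≤ a.1 ∧ a.2.1 = S.filter (fun p => p.1 < a.1) := by
  by_contra hc
  rw [pathConcept, if_neg hc] at h
  omega

/-- A label `≥ 2` reveals the length of the path. -/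
lemma eq_of_two_le {n : ℕ} {S : Finset (ℕ × ℕ)} {a : ℕ × Finset (ℕ × ℕ) × ℕ}
    (h : 2 ≤ pathConcept n S a) : pathConcept n S a = n + 2 := by
  unfold pathConcept at h ⊢
  split_ifs at h ⊢ <;> omega

/-! ### Realizable label sequences -/

/-- A realizable sequence with a label `≥ 2` is produced by a single concept. -/
lemma exists_concept_of_two_le {xs : ℕ → ℕ × Finset (ℕ × ℕ) × ℕ} {ys : ℕ → ℕ}
    (hr : Realizable pathClass xs ys) {t : ℕ} (ht : 2 ≤ ys t) :
    ∃ h ∈ pathClass, ys = h ∘ xs := by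
  have h1 : ∀ n, ∃ S : (positions (ys t - 2)).powerset,
      ∀ i < n + t + 1, pathConcept (ys t - 2) S (xs i) = ys i := by
    intro n
    obtain ⟨_, ⟨m, S, hS, rfl⟩, hh⟩ := hr (n + t + 1)
    have h2 := hh t (by omega)
    have h3 := eq_of_two_le (h2 ▸ ht)
    obtain rfl : m = ys t - 2 := by omega
    exact ⟨⟨S, Finset.mem_powerset.2 hS⟩, hh⟩
  choose S hS using h1
  obtain ⟨S₀, hS₀⟩ := Finite.exists_infinite_fiber S
  refine ⟨_, ⟨ys t - 2, S₀, Finset.mem_powerset.1 S₀.2, rfl⟩, funext fun i => ?_⟩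
  obtain ⟨n, hn, hin⟩ := (Set.infinite_coe_iff.1 hS₀).exists_gt i
  have : S n = S₀ := hn
  rw [Function.comp_apply, ← this, hS n i (by omega)]

/-- A realizable sequence on finitely many distinct instances is produced by a single concept. -/
lemma exists_concept_of_finite {X Y : Type*} {H : Set (X → Y)} {xs : ℕ → X} {ys : ℕ → Y}
    (hr : Realizable H xs ys) (hfin : (Set.range xs).Finite) :
    ∃ h ∈ H, ys = h ∘ xs := by
  obtain ⟨s, hs⟩ : ∃ s : Finset ℕ, ∀ i, ∃ j ∈ s, xs j = xs i := by
    choose g hg using fun a : Set.range xs => a.2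
    have := hfin.fintype
    exact ⟨Finset.univ.image g, fun i => ⟨g ⟨xs i, i, rfl⟩,
      Finset.mem_image_of_mem _ (Finset.mem_univ _), hg _⟩⟩
  obtain ⟨h, hH, hh⟩ := hr (s.sup id + 1)
  refine ⟨h, hH, funext fun i => ?_⟩
  obtain ⟨j, hj, hji⟩ := hs i
  have hjs : j ≤ s.sup id := Finset.le_sup (f := id) hj
  obtain ⟨h', -, hh'⟩ := hr (i + j + 1)
  rw [Function.comp_apply, ← hji, hh j (by omega), ← hh' i (by omega), ← hh' j (by omega), hji]

/-- If all labels are `≤ 1` and there are infinitely many distinct instances, the depths of the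
instances are unbounded. -/
lemma exists_deep {xs : ℕ → ℕ × Finset (ℕ × ℕ) × ℕ} {ys : ℕ → ℕ}
    (hr : Realizable pathClass xs ys) (hy : ∀ t, ys t ≤ 1) (hinf : (Set.range xs).Infinite)
    (K : ℕ) : ∃ s, K < (xs s).1 := by
  by_contra! hK
  refine hinf (((Finset.range (K + 1)) ×ˢ (positions K).powerset ×ˢ
    (Finset.range (K + 1))).finite_toSet.subset ?_)
  rintro _ ⟨t, rfl⟩
  obtain ⟨_, ⟨m, S, hS, rfl⟩, hh⟩ := hr (t + 1)
  obtain ⟨-, h2, h3⟩ := on_path ((hh t (by omega)).le.trans (hy t))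
  have hk := hK t
  simp only [Finset.coe_product, Set.mem_prod, Finset.mem_coe, Finset.mem_range,
    Finset.mem_powerset]
  refine ⟨by omega, ?_, by omega⟩
  rw [h3]
  intro p hp
  rw [Finset.mem_filter] at hp
  have := mem_positions.1 (hS hp.1)
  exact mem_positions.2 ⟨by omega, this.2⟩

/-- With all labels `≤ 1`, the name of a deeper node determines the label of an instance. -/
lemma label_eq {xs : ℕ → ℕ × Finset (ℕ × ℕ) × ℕ} {ys : ℕ → ℕ}
    (hr : Realizable pathClass xs ys) (hy : ∀ t, ys t ≤ 1) {s t : ℕ}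
    (hst : (xs t).1 < (xs s).1) :
    ys t = if ((xs t).1, (xs t).2.2) ∈ (xs s).2.1 then 1 else 0 := by
  obtain ⟨_, ⟨m, S, hS, rfl⟩, hh⟩ := hr (s + t + 1)
  have ht := on_path ((hh t (by omega)).le.trans (hy t))
  obtain ⟨-, -, h3⟩ := on_path ((hh s (by omega)).le.trans (hy s))
  rw [← hh t (by omega), pathConcept, if_pos ht, h3]
  simp only [Finset.mem_filter, hst, and_true]

lemma countable_realizable (xs : ℕ → ℕ × Finset (ℕ × ℕ) × ℕ) :
    {ys | Realizable pathClass xs ys}.Countable := by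
  have h1 : ((fun h => h ∘ xs) '' pathClass).Countable := countable_pathClass.image _
  have h2 : {ys | Realizable pathClass xs ys ∧ (∀ t, ys t ≤ 1) ∧
      (Set.range xs).Infinite}.Subsingleton := by
    rintro ys ⟨hr, hy, hinf⟩ ys' ⟨hr', hy', -⟩
    funext t
    obtain ⟨s, hs⟩ := exists_deep hr hy hinf (xs t).1
    rw [label_eq hr hy hs, label_eq hr' hy' hs]
  refine (h1.union h2.countable).mono fun ys hr => ?_
  by_cases hy : ∀ t, ys t ≤ 1
  · by_cases hfin : (Set.range xs).Finite
    · obtain ⟨h, hH, rfl⟩ := exists_concept_of_finite hr hfin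
      exact Or.inl ⟨h, hH, rfl⟩
    · exact Or.inr ⟨hr, hy, hfin⟩
  · push Not at hy
    obtain ⟨t, ht⟩ := hy
    obtain ⟨h, hH, rfl⟩ := exists_concept_of_two_le hr ht
    exact Or.inl ⟨h, hH, rfl⟩

/-- There are a countably infinite instance space `X`, the label space
`ℕ` and a concept class `H` that has an infinite LCLL tree, yet for every instance
sequence there is a deterministic transductive online learner making only finitely many
mistakes on every realizable label sequence. -/
theorem statement11 :
    ∃ (X : Type) (H : Set (X → ℕ)), Countable X ∧ Infinite X ∧
      HasInfLCLLTree H ∧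
      ∀ xs : ℕ → X, ∃ A : DetPred X ℕ, ∀ ys : ℕ → ℕ, Realizable H xs ys →
        ∃ C : ℕ, ∀ T : ℕ, detMistakes A xs ys T ≤ C := by
  exact ⟨ℕ × Finset (ℕ × ℕ) × ℕ, pathClass, inferInstance, inferInstance,
    hasInfLCLLTree_pathClass, fun xs => exists_learner xs _ (countable_realizable xs)⟩
end
end

section
/- Let 𝒳 be a set, 𝒴 a countable set, and ℋ ⊆ 𝒴^𝒳 a concept class containing two concepts h₁, h₂ with h₁(x) ≠ h₂(x) for some x ∈ 𝒳. Then for every transductive online learning algorithm 𝒜 (deterministic or randomized, regret measured in expectation over its internal randomness) there exists a sequence (𝕏,𝕐,𝕐*) with (𝕏,𝕐*) realizable by ℋ such that Regret(𝒜,(𝕏,𝕐,𝕐*),T) ≠ o(√T), i.e., limsup_{T→∞} Regret(𝒜,(𝕏,𝕐,𝕐*),T)/√T > 0. -/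
/-!
Put `a = h1 x`, `b = h2 x` and let every instance be `x`; the comparator is one of the constant
sequences `a`, `b`, and the labels `ys` are chosen from `{a, b}` by an adversary who knows `A`.

With uniformly random labels on a block of length `N`, any predictor errs at least `N / 2` times on
average, while the better of the two constants errs `N / 2 - |S| / 2` times, `S` being a simple
random walk at time `N`; since `E |S| ≥ √N / 2`, some choice of labels yields block regret at least
`√N / 4`. This is derandomized in `exists_block_potential`: `E |S|` is bounded below through the
minorant `|s| ≥ q s² - q³ s⁴ / 6` with `q = 1 / √N` (`minorant_le_abs`), whose expectation along the
walk is the explicit polynomial `walkPotential`, and the adversary never lets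
the excess of mistakes over half the rounds, plus the potential, decrease.

A block of length `64 (n + 1)²` started at time `n` outweighs the regret `≥ -n` of the past
(`exists_extend`). Concatenating such blocks gives one label sequence for which, at infinitely many
`T`, one of the two constants beats `A` by `√T / 16`; one of them serves infinitely often.
-/

open Filter MeasureTheory
open scoped ENNReal

attribute [local instance] Classical.propDecidable

noncomputable section


/-- Expected regret of the randomized algorithm `A` on `(xs, ys, ystar)` during the
first `T` rounds. -/
def regret {X Y : Type*} (A : RandPred X Y) (xs : ℕ → X) (ys ystar : ℕ → Y) (T : ℕ) : ℝ :=
  ∑ t ∈ Finset.range T,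
    ((mistakeProb (A xs ((List.range t).map ys)) (ys t)).toReal -
      if ystar t = ys t then 0 else 1)

/-- Half the expected value of `q S² - q³ S⁴ / 6`, where `S = s + ξ` and `ξ` is a sum of `m`
independent uniform signs, so that `E S² = s² + m` and `E S⁴ = s⁴ + 6 s² m + 3 m² - 2 m`. -/
def walkPotential (q m s : ℝ) : ℝ :=
  (q * (s ^ 2 + m) - q ^ 3 / 6 * (s ^ 4 + 6 * s ^ 2 * m + 3 * m ^ 2 - 2 * m)) / 2

lemma walkPotential_succ (q m s : ℝ) :
    walkPotential q (m + 1) s = (walkPotential q m (s + 1) + walkPotential q m (s - 1)) / 2 := by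
  unfold walkPotential; ring

lemma minorant_le_abs {q : ℝ} (hq : 0 < q) (s : ℝ) : walkPotential q 0 s ≤ |s| / 2 := by
  have hu : 0 ≤ q * |s| := by positivity
  set u := q * |s| with hud
  have h1 : 0 ≤ u ^ 3 - 6 * u + 6 := by
    nlinarith [mul_nonneg hu (sq_nonneg (u - 7 / 5)), sq_nonneg (u - 7 / 5)]
  have h2 : 0 ≤ |s| * (u ^ 3 - 6 * u + 6) := mul_nonneg (abs_nonneg s) h1
  have h3 : |s| ^ 2 = s ^ 2 := sq_abs s
  have h4 : |s| ^ 4 = s ^ 4 := by rw [show (4 : ℕ) = 2 * 2 from rfl, pow_mul, pow_mul, h3]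
  have h5 : |s| * (u ^ 3 - 6 * u + 6) = q ^ 3 * s ^ 4 - 6 * (q * s ^ 2) + 6 * |s| := by
    rw [← h3, ← h4, hud]; ring
  unfold walkPotential
  linarith

/-- The increment of the walk: `+1` on the label `a` and `-1` on any other label. -/
def labelSign {Y : Type*} (a y : Y) : ℝ := if a = y then 1 else -1

lemma map_range_congr {Y : Type*} {u v : ℕ → Y} {t : ℕ} (h : ∀ i < t, u i = v i) :
    (List.range t).map u = (List.range t).map v :=
  List.map_congr_left fun i hi => h i (List.mem_range.1 hi)

/-- The adversary's strategy on a block of length `m` started at time `n` from walk position `s`.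
`G l y` is the expected loss of the predictor after history `l` when the label is `y`. -/
lemma exists_block_potential {Y : Type*} {a b : Y} (hab : a ≠ b) (G : List Y → Y → ℝ)
    (hG : ∀ l, 1 ≤ G l a + G l b) (q : ℝ) (m : ℕ) :
    ∀ (n : ℕ) (ys : ℕ → Y) (s : ℝ), ∃ ys' : ℕ → Y, (∀ i < n, ys' i = ys i) ∧
      (∀ i, n ≤ i → i < n + m → ys' i = a ∨ ys' i = b) ∧
      walkPotential q m s ≤
        ∑ t ∈ Finset.Ico n (n + m), (G ((List.range t).map ys') (ys' t) - 1 / 2) +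
        walkPotential q 0 (s + ∑ t ∈ Finset.Ico n (n + m), labelSign a (ys' t)) := by
  induction m with
  | zero =>
    intro n ys s
    exact ⟨ys, fun _ _ => rfl, fun i h1 h2 => by omega, by simp⟩
  | succ m ih =>
    intro n ys s
    set l := (List.range n).map ys with hl
    -- One of the two labels keeps loss plus potential at least at its average.
    obtain ⟨y, hy, hstep⟩ : ∃ y, (y = a ∨ y = b) ∧ walkPotential q (m + 1) s ≤
        (G l y - 1 / 2) + walkPotential q m (s + labelSign a y) := by
      by_contra! hcon
      have ha := hcon a (Or.inl rfl)
      have hb := hcon b (Or.inr rfl)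
      rw [labelSign, if_pos rfl] at ha
      rw [labelSign, if_neg hab, ← sub_eq_add_neg] at hb
      have := walkPotential_succ q m s
      have := hG l
      linarith
    obtain ⟨ys', h1, h2, h3⟩ := ih (n + 1) (Function.update ys n y) (s + labelSign a y)
    have hn : ys' n = y := by rw [h1 n (by omega), Function.update_self]
    have hpre : ∀ i < n, ys' i = ys i := fun i hi => by
      rw [h1 i (by omega), Function.update_of_ne (by omega)]
    refine ⟨ys', hpre, fun i hi hi' => ?_, ?_⟩
    · rcases hi.eq_or_lt with rfl | hi
      · rwa [hn]
      · exact h2 i hi (by omega)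
    · have hlt : n < n + (m + 1) := by omega
      rw [Finset.sum_eq_sum_Ico_succ_bot hlt, Finset.sum_eq_sum_Ico_succ_bot hlt, hn,
        map_range_congr hpre, ← hl, ← add_assoc s, show n + (m + 1) = n + 1 + m by omega]
      push_cast
      linarith

/-- On a block of any length `N`, the adversary forces regret `√N / 4` against a constant. -/
lemma exists_block {Y : Type*} {a b : Y} (hab : a ≠ b) (G : List Y → Y → ℝ)
    (hG : ∀ l, 1 ≤ G l a + G l b) (n N : ℕ) (hN : 0 < N) (ys : ℕ → Y) :
    ∃ ys' : ℕ → Y, (∀ i < n, ys' i = ys i) ∧ ∃ c, (c = a ∨ c = b) ∧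
      √N / 4 ≤ ∑ t ∈ Finset.Ico n (n + N),
        (G ((List.range t).map ys') (ys' t) - if c = ys' t then 0 else 1) := by
  have hN' : (0 : ℝ) < N := by exact_mod_cast hN
  have hr : 0 < √(N : ℝ) := Real.sqrt_pos.2 hN'
  have hrN : √(N : ℝ) ^ 2 = N := Real.sq_sqrt hN'.le
  set r := √(N : ℝ) with hrd
  obtain ⟨ys', h1, h2, h3⟩ := exists_block_potential hab G hG r⁻¹ N n ys 0
  refine ⟨ys', h1, ?_⟩
  set D := ∑ t ∈ Finset.Ico n (n + N), (G ((List.range t).map ys') (ys' t) - 1 / 2)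
  set S := ∑ t ∈ Finset.Ico n (n + N), labelSign a (ys' t)
  have h4 := minorant_le_abs (inv_pos.2 hr) (0 + S)
  have h5 : r / 4 ≤ walkPotential r⁻¹ N 0 := by
    have : walkPotential r⁻¹ N 0 = r / 4 + 1 / (6 * r) := by
      unfold walkPotential
      rw [← hrN]
      field_simp
      ring
    rw [this]
    have : 0 < 1 / (6 * r) := by positivity
    linarith
  rw [zero_add] at h3 h4
  have ha : ∑ t ∈ Finset.Ico n (n + N),
      (G ((List.range t).map ys') (ys' t) - if a = ys' t then 0 else 1) = D + S / 2 := by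
    rw [Finset.sum_div, ← Finset.sum_add_distrib]
    refine Finset.sum_congr rfl fun t _ => ?_
    unfold labelSign
    split_ifs <;> ring
  have hb : ∑ t ∈ Finset.Ico n (n + N),
      (G ((List.range t).map ys') (ys' t) - if b = ys' t then 0 else 1) = D - S / 2 := by
    rw [Finset.sum_div, ← Finset.sum_sub_distrib]
    refine Finset.sum_congr rfl fun t ht => ?_
    rw [Finset.mem_Ico] at ht
    unfold labelSign
    rcases h2 t ht.1 ht.2 with h | h
    · rw [h, if_pos rfl, if_neg hab.symm]; ring
    · rw [h, if_pos rfl, if_neg hab]; ring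
  rcases abs_cases S with ⟨hS, _⟩ | ⟨hS, _⟩
  · exact ⟨a, Or.inl rfl, by rw [ha]; linarith⟩
  · exact ⟨b, Or.inr rfl, by rw [hb]; linarith⟩

lemma mistakeProb_add {Y : Type*} (p : PMF Y) {a b : Y} (hab : a ≠ b) :
    1 ≤ (mistakeProb p a).toReal + (mistakeProb p b).toReal := by
  have hfin : ∀ c, mistakeProb p c ≠ ∞ := fun c => by
    refine ne_top_of_le_ne_top ENNReal.one_ne_top ?_
    rw [← p.tsum_coe]
    refine ENNReal.tsum_le_tsum fun y => ?_
    split_ifs <;> simp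
  rw [← ENNReal.toReal_add (hfin a) (hfin b), ← ENNReal.toReal_one]
  refine ENNReal.toReal_mono (ENNReal.add_ne_top.2 ⟨hfin a, hfin b⟩) ?_
  rw [← p.tsum_coe, mistakeProb, mistakeProb, ← ENNReal.tsum_add]
  refine ENNReal.tsum_le_tsum fun y => ?_
  by_cases h : y = a
  · subst h; simp [hab]
  · simp [h]

lemma regret_congr {X Y : Type*} (A : RandPred X Y) (xs : ℕ → X) {u v : ℕ → Y} (w : ℕ → Y)
    {T : ℕ} (h : ∀ i < T, u i = v i) : regret A xs u w T = regret A xs v w T := by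
  refine Finset.sum_congr rfl fun t ht => ?_
  have ht := Finset.mem_range.1 ht
  rw [h t ht, map_range_congr fun i hi => h i (hi.trans ht)]

/-- Any finite history can be continued until some constant beats `A` by `√T / 16`. -/
lemma exists_extend {X Y : Type*} (A : RandPred X Y) (xs : ℕ → X) {a b : Y} (hab : a ≠ b)
    (n : ℕ) (ys : ℕ → Y) :
    ∃ (T : ℕ) (ys' : ℕ → Y), n < T ∧ (∀ i < n, ys' i = ys i) ∧ ∃ c, (c = a ∨ c = b) ∧
      1 / 16 * √T ≤ regret A xs ys' (fun _ => c) T := by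
  obtain ⟨N, hN⟩ : ∃ N, N = 64 * (n + 1) ^ 2 := ⟨_, rfl⟩
  have hnN : n < N := by rw [hN]; nlinarith
  obtain ⟨ys', h1, c, hc, h2⟩ := exists_block hab (fun l y => (mistakeProb (A xs l) y).toReal)
    (fun l => mistakeProb_add (A xs l) hab) n N (by omega) ys
  refine ⟨n + N, ys', by omega, h1, c, hc, ?_⟩
  have hsq : √(N : ℝ) = 8 * (n + 1) := by
    rw [hN, Real.sqrt_eq_iff_mul_self_eq_of_pos (by positivity)]
    push_cast; ring
  have hT : √((n + N : ℕ) : ℝ) ≤ 2 * √(N : ℝ) := by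
    rw [Real.sqrt_le_left (by positivity), mul_pow, Real.sq_sqrt (Nat.cast_nonneg _)]
    have : (n : ℝ) < N := by exact_mod_cast hnN
    push_cast
    linarith
  have hpast : -(n : ℝ) ≤ ∑ t ∈ Finset.range n,
      ((mistakeProb (A xs ((List.range t).map ys')) (ys' t)).toReal -
        if c = ys' t then 0 else 1) := by
    have : ∑ t ∈ Finset.range n, (-1 : ℝ) = -(n : ℝ) := by simp
    rw [← this]
    refine Finset.sum_le_sum fun t _ => ?_
    have := ENNReal.toReal_nonneg (a := mistakeProb (A xs ((List.range t).map ys')) (ys' t))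
    split_ifs <;> linarith
  rw [regret, ← Finset.sum_range_add_sum_Ico _ (Nat.le_add_right n N)]
  linarith

/-- Infinitely many successive extensions converge to a single sequence. -/
lemma exists_limit {Y : Type*} [Nonempty Y] (P : ℕ → (ℕ → Y) → Prop)
    (hP : ∀ T u v, (∀ i < T, u i = v i) → P T u → P T v)
    (hext : ∀ (n : ℕ) (ys : ℕ → Y), ∃ (T : ℕ) (ys' : ℕ → Y), n < T ∧ (∀ i < n, ys' i = ys i) ∧ P T ys') :
    ∃ ys, ∃ᶠ T in atTop, P T ys := by
  choose τ e hτ hagree hPe using hext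
  let next : ℕ × (ℕ → Y) → ℕ × (ℕ → Y) := fun p => (τ p.1 p.2, e p.1 p.2)
  let st : ℕ → ℕ × (ℕ → Y) := fun k => next^[k] (0, fun _ => Classical.arbitrary Y)
  have hst : ∀ k, st (k + 1) = next (st k) := fun k => Function.iterate_succ_apply' ..
  have hmono : StrictMono fun k => (st k).1 := strictMono_nat_of_lt_succ fun k => by
    rw [hst]; exact hτ _ _
  have hstable : ∀ k j, k ≤ j → ∀ i < (st k).1, (st j).2 i = (st k).2 i := by
    intro k j hkj
    induction j, hkj using Nat.le_induction with
    | base => exact fun _ _ => rfl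
    | succ j hj ih =>
      intro i hi
      rw [← ih i hi, hst]
      exact hagree _ _ i (hi.trans_le (hmono.monotone hj))
  refine ⟨fun i => (st (i + 1)).2 i, frequently_atTop.2 fun k => ⟨(st (k + 1)).1, ?_, ?_⟩⟩
  · exact (Nat.le_succ k).trans (hmono.id_le (k + 1))
  · refine hP _ (st (k + 1)).2 _ (fun i hi => ?_) (by rw [hst]; exact hPe _ _)
    rcases le_total (k + 1) (i + 1) with h | h
    · exact (hstable _ _ h i hi).symm
    · exact hstable _ _ h i (hmono.id_le (i + 1))

/-- If `H` contains two concepts disagreeing at some point, then no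
(randomized, hence in particular deterministic) transductive online learning algorithm
achieves `o(√T)` regret on every sequence: some sequence with realizable comparator has
regret at least `c·√T` infinitely often, for some `c > 0`. -/
theorem statement16 {X Y : Type*} [Countable Y] (H : Set (X → Y))
    (h1 h2 : X → Y) (hh1 : h1 ∈ H) (hh2 : h2 ∈ H) (x : X) (hx : h1 x ≠ h2 x)
    (A : RandPred X Y) :
    ∃ (xs : ℕ → X) (ys ystar : ℕ → Y), Realizable H xs ystar ∧
      ∃ c : ℝ, 0 < c ∧
        ∃ᶠ T : ℕ in Filter.atTop, c * Real.sqrt T ≤ regret A xs ys ystar T := by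
  obtain ⟨ys, hys⟩ : ∃ ys, ∃ᶠ T : ℕ in atTop, ∃ c, (c = h1 x ∨ c = h2 x) ∧
      1 / 16 * √T ≤ regret A (fun _ => x) ys (fun _ => c) T := by
    have : Nonempty Y := ⟨h1 x⟩
    refine exists_limit _ ?_ (exists_extend A (fun _ => x) hx)
    rintro T u v huv ⟨c, hc, h⟩
    exact ⟨c, hc, by rwa [← regret_congr A _ _ huv]⟩
  have hor : ∃ᶠ T : ℕ in atTop,
      1 / 16 * √T ≤ regret A (fun _ => x) ys (fun _ => h1 x) T ∨
      1 / 16 * √T ≤ regret A (fun _ => x) ys (fun _ => h2 x) T := by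
    refine hys.mono ?_
    rintro T ⟨c, rfl | rfl, h⟩
    · exact Or.inl h
    · exact Or.inr h
  rcases frequently_or_distrib.1 hor with h | h
  · exact ⟨fun _ => x, ys, fun _ => h1 x, fun _ => ⟨h1, hh1, fun _ _ => rfl⟩, 1 / 16, by norm_num, h⟩
  · exact ⟨fun _ => x, ys, fun _ => h2 x, fun _ => ⟨h2, hh2, fun _ _ => rfl⟩, 1 / 16, by norm_num, h⟩
end
end
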